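/- Let X = A_3 be embedded in Y = B_7 = SO_{15} via the 15-dimensional irreducible representation of highest weight δ = ω_1 + ω_3. Let λ be a dominant weight for Y with λ ≠ 0, λ_1. Then V_Y(λ)↓X is multiplicity-free if and only if λ = λ_2, 2λ_1, 3λ_1, or λ_3. -/

import Mathlib

/-!
# Common framework

Over an algebraically closed field of characteristic zero, finite–dimensional rational
representations of a simple algebraic group are semisimple and are determined by their
formal characters, i.e. by elements of the group ring of the (rational) weight lattice;
the character of the irreducible module of highest weight `λ` is pinned down by the
Weyl character formula `A_ρ · χ_λ = A_{λ+ρ}`.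

Below we model, completely combinatorially:

* type `A_r` : weights are realised by their traceless representatives in `Fin (r+1) → ℚ`
  (the `gl`-coordinates), and the Weyl group is the symmetric group;
* types `B_n, C_n, D_n` : weights are realised in the standard `ε`-coordinates
  `Fin n → ℚ`, and the Weyl group consists of (signed) permutations, with evenly many
  sign changes in type `D`;
* an embedding `X = A_r < Y` (classical of type `t` and rank `n`) in which `X` acts on
  the natural module `W` of `Y` irreducibly with highest weight `δ` : the weights of `W`
  are `± w i` (plus one zero weight in type `B`), and restriction of characters is induced
  by the map `v ↦ ∑ i, v i • w i` of weight lattices;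
* `IsMFRes t n r δ lam` : the restriction to `X` of the irreducible `Y`-module with
  highest weight `lam` is multiplicity-free, i.e. its character is a sum of distinct
  irreducible characters of `X`.

Dominant weights are always recorded by their (natural number) coordinates in the basis
of fundamental weights, `e n k` being the `k`-th fundamental weight (1-indexed).
-/

noncomputable section

namespace MFPaper

/-- The Dynkin type of a classical group `B_n = SO_{2n+1}`, `C_n = Sp_{2n}`, `D_n = SO_{2n}`. -/
inductive CType | B | C | D
deriving DecidableEq

/-- The character ring: the integral group ring of a rational weight space
with `k` coordinates. -/
abbrev CharRing (k : ℕ) : Type := AddMonoidAlgebra ℤ (Fin k → ℚ)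

/-- The formal exponential `e^v` of a weight `v`. -/
def mono {k : ℕ} (v : Fin k → ℚ) : CharRing k := AddMonoidAlgebra.single v 1

/-- `e n k` : the `k`-th fundamental dominant weight (`1 ≤ k ≤ n`, 1-indexed) of a rank `n`
group, recorded by its coordinates in the basis of fundamental weights. -/
def e (n k : ℕ) : Fin n → ℕ := fun i => if (i : ℕ) + 1 = k then 1 else 0

/-! ### Type `A_r` -/

/-- The partition (`gl`) lift of the dominant weight of `A_r` with coordinates `d`
in the basis of fundamental weights. -/
def partLift (r : ℕ) (d : Fin r → ℕ) : Fin (r + 1) → ℚ := fun i =>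
  ∑ j ∈ Finset.univ.filter (fun j : Fin r => (i : ℕ) ≤ (j : ℕ)), (d j : ℚ)

/-- The traceless (`sl`) representative of the dominant weight of `A_r` with coordinates `d`. -/
def slWt (r : ℕ) (d : Fin r → ℕ) : Fin (r + 1) → ℚ := fun i =>
  partLift r d i - (∑ j : Fin r, (((j : ℕ) : ℚ) + 1) * (d j : ℚ)) / (r + 1)

/-- A lift of the half-sum of the positive roots of `A_r`. -/
def rhoA (r : ℕ) : Fin (r + 1) → ℚ := fun i => (r : ℚ) - (i : ℕ)

/-- The Weyl alternating sum `A_v = ∑_{σ} sgn(σ) e^{σ v}` for type `A_r`. -/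
def altA (r : ℕ) (v : Fin (r + 1) → ℚ) : CharRing (r + 1) :=
  ∑ σ : Equiv.Perm (Fin (r + 1)),
    ((Equiv.Perm.sign σ : ℤˣ) : ℤ) • mono (fun i => v (σ i))

/-- `IsCharA r d f` : `f` is the formal character of the irreducible `A_r`-module
of highest weight `d` (Weyl character formula). -/
def IsCharA (r : ℕ) (d : Fin r → ℕ) (f : CharRing (r + 1)) : Prop :=
  altA r (rhoA r) * f = altA r (slWt r d + rhoA r)

/-- `Decomp r F c` : the character `F` of a representation of `A_r` decomposes as
`∑_μ (c μ) · χ_μ`, i.e. the irreducible of highest weight `μ` occurs in it as a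
composition factor with multiplicity `c μ`. -/
def Decomp (r : ℕ) (F : CharRing (r + 1)) (c : (Fin r → ℕ) →₀ ℕ) : Prop :=
  F * altA r (rhoA r) = c.sum fun μ k => (k : ℤ) • altA r (slWt r μ + rhoA r)

/-- The Weyl dimension formula for type `A_r`. -/
def dimA (r : ℕ) (d : Fin r → ℕ) : ℚ :=
  ∏ p ∈ Finset.univ.filter (fun p : Fin (r + 1) × Fin (r + 1) => (p.1 : ℕ) < (p.2 : ℕ)),
    ((partLift r d p.1 - partLift r d p.2 + ((p.2 : ℕ) : ℚ) - ((p.1 : ℕ) : ℚ)) /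
      (((p.2 : ℕ) : ℚ) - ((p.1 : ℕ) : ℚ)))

/-- The self-dual irreducible `A_r`-module of highest weight `d` is *symplectic*
(it carries an invariant alternating form); by Steinberg's criterion this happens
exactly when `⟨d, 2ρ^∨⟩ = ∑ d_k · k(r+1-k)` is odd. -/
def IsSympWt (r : ℕ) (d : Fin r → ℕ) : Prop :=
  Odd (∑ i : Fin r, d i * ((i : ℕ) + 1) * (r - (i : ℕ)))

/-! ### The classical types `B`, `C`, `D` -/

/-- Convenient access to the `k`-th (0-indexed) coordinate. -/
def cval {n : ℕ} (c : Fin n → ℕ) (k : ℕ) : ℚ := if h : k < n then (c ⟨k, h⟩ : ℚ) else 0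

/-- `ε`-coordinates of the dominant weight of the classical group of type `t` and rank `n`
with coordinates `c` in the basis of fundamental weights (Bourbaki numbering). -/
def epsWt (t : CType) (n : ℕ) (c : Fin n → ℕ) : Fin n → ℚ := fun i =>
  (∑ k ∈ Finset.univ.filter (fun k : Fin n => (i : ℕ) ≤ (k : ℕ)), (c k : ℚ)) -
    (match t with
      | .C => 0
      | .B => cval c (n - 1) / 2
      | .D => (cval c (n - 2) + cval c (n - 1)) / 2)

/-- The half-sum of the positive roots in `ε`-coordinates. -/
def rhoY (t : CType) (n : ℕ) : Fin n → ℚ := fun i =>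
  match t with
  | .C => (n : ℚ) - (i : ℕ)
  | .B => (n : ℚ) - (i : ℕ) - 1 / 2
  | .D => (n : ℚ) - 1 - (i : ℕ)

/-- The Weyl alternating sum for the classical group of type `t` and rank `n`:
the Weyl group consists of the signed permutations of the coordinates,
with evenly many sign changes in type `D`. -/
def altY (t : CType) (n : ℕ) (v : Fin n → ℚ) : CharRing n :=
  ∑ σ : Equiv.Perm (Fin n), ∑ s : Fin n → Bool,
    if t = CType.D ∧ ¬ Even (Finset.univ.filter (fun i => s i = true)).card then 0
    else (((Equiv.Perm.sign σ : ℤˣ) : ℤ) *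
          (-1) ^ (Finset.univ.filter (fun i => s i = true)).card) •
      mono (fun i => (if s i then -1 else 1) * v (σ i))

/-- `IsCharY t n c f` : `f` is the formal character of the irreducible module of highest
weight `c` for the classical group of type `t` and rank `n` (Weyl character formula). -/
def IsCharY (t : CType) (n : ℕ) (c : Fin n → ℕ) (f : CharRing n) : Prop :=
  altY t n (rhoY t n) * f = altY t n (epsWt t n c + rhoY t n)

/-! ### The embedding `X = A_r < Y` via `δ`, and restriction of characters -/

/-- `WtSys t n r δ w` : `w` lists "half" of the weights of the natural module
`W = V_X(δ)` of the classical group `Y` of type `t` and rank `n`, for `X = A_r`: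
the weights of `W` (with multiplicity) are exactly the `± w i`, together with one
extra zero weight in type `B`.  Such a `w` records a maximal torus embedding
`T_X → T_Y` realising the irreducible embedding `X < Y = SO(W)` or `Sp(W)` given
by the representation of highest weight `δ`. -/
def WtSys (t : CType) (n r : ℕ) (δ : Fin r → ℕ)
    (w : Fin n → (Fin (r + 1) → ℚ)) : Prop :=
  ((∑ i : Fin n, (mono (w i) + mono (-(w i)))) +
      (if t = CType.B then mono (0 : Fin (r + 1) → ℚ) else 0)) * altA r (rhoA r)
    = altA r (slWt r δ + rhoA r)

/-- Restriction of characters from `Y` to `X = A_r` along the torus embedding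
recorded by `w`. -/
def resChar {n r : ℕ} (w : Fin n → (Fin (r + 1) → ℚ)) (F : CharRing n) :
    CharRing (r + 1) :=
  AddMonoidAlgebra.mapDomain (fun v : Fin n → ℚ => ∑ i : Fin n, v i • w i) F

/-- `IsMFRes t n r δ lam` : in the embedding `X = A_r < Y` (the classical group of type
`t` and rank `n`) given by the irreducible representation of highest weight `δ`, the
restriction to `X` of the irreducible `Y`-module of highest weight `lam` is
multiplicity-free: its character is a sum of *distinct* irreducible characters of `X`. -/
def IsMFRes (t : CType) (n r : ℕ) (δ : Fin r → ℕ) (lam : Fin n → ℕ) : Prop :=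
  ∀ w, WtSys t n r δ w → ∀ f, IsCharY t n lam f →
    ∃ c : (Fin r → ℕ) →₀ ℕ, Decomp r (resChar w f) c ∧ ∀ μ, c μ ≤ 1

/-- The operation `e^v ↦ e^{k·v}` on characters (Adams operation on the torus),
used to express symmetric and exterior powers of characters. -/
def pw {m : ℕ} (k : ℕ) (F : CharRing m) : CharRing m :=
  AddMonoidAlgebra.mapDomain (fun v : Fin m → ℚ => (k : ℚ) • v) F

/-- The irreducible `A_r`-module of highest weight `d` carries a nonzero invariant
*symmetric* bilinear form, i.e. the trivial module occurs in its symmetric square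
(whose character `S` satisfies `2S = f² + f^{[2]}`). -/
def HasSymForm (r : ℕ) (d : Fin r → ℕ) : Prop :=
  ∀ f, IsCharA r d f →
    ∃ c : (Fin r → ℕ) →₀ ℕ,
      (f * f + pw 2 f) * altA r (rhoA r)
          = c.sum (fun μ k => ((2 * k : ℕ) : ℤ) • altA r (slWt r μ + rhoA r)) ∧ 1 ≤ c 0

/-- The irreducible `A_r`-module of highest weight `d` carries a nonzero invariant
*alternating* bilinear form, i.e. the trivial module occurs in its exterior square
(whose character `Λ` satisfies `2Λ = f² - f^{[2]}`). -/
def HasAltForm (r : ℕ) (d : Fin r → ℕ) : Prop :=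
  ∀ f, IsCharA r d f →
    ∃ c : (Fin r → ℕ) →₀ ℕ,
      (f * f - pw 2 f) * altA r (rhoA r)
          = c.sum (fun μ k => ((2 * k : ℕ) : ℤ) • altA r (slWt r μ + rhoA r)) ∧ 1 ≤ c 0

end MFPaper

open MFPaper

namespace MFProof

lemma mono_mul {k : ℕ} (u v : Fin k → ℚ) : mono u * mono v = mono (u + v) := by
  simp [mono, AddMonoidAlgebra.single_mul_single]

lemma mono_zero {k : ℕ} : mono (0 : Fin k → ℚ) = 1 := rfl

lemma mono_coeff {k : ℕ} (u p : Fin k → ℚ) : (mono u).coeff p = if u = p then 1 else 0 := by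
  classical
  simp [mono, AddMonoidAlgebra.coeff_single, Finsupp.single_apply]

instance (k : ℕ) : IsDomain (CharRing k) := NoZeroDivisors.to_isDomain _

/-- ring hom on characters induced by a linear map of weights -/
def mapR {k l : ℕ} (φ : (Fin k → ℚ) →+ (Fin l → ℚ)) : CharRing k →+* CharRing l :=
  AddMonoidAlgebra.mapDomainRingHom ℤ φ

lemma mapR_mono {k l : ℕ} (φ : (Fin k → ℚ) →+ (Fin l → ℚ)) (v) : mapR φ (mono v) = mono (φ v) := by
  simp [mapR, mono, AddMonoidAlgebra.mapDomain_single]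

lemma altA_coeff (r : ℕ) (v p : Fin (r+1) → ℚ) :
    (altA r v).coeff p = ∑ σ : Equiv.Perm (Fin (r+1)), ((Equiv.Perm.sign σ : ℤˣ) : ℤ) *
      (if (fun i => v (σ i)) = p then 1 else 0) := by
  simp only [altA, AddMonoidAlgebra.coeff_sum, Finsupp.finsetSum_apply, AddMonoidAlgebra.coeff_smul,
    Finsupp.smul_apply, mono_coeff, smul_eq_mul]

/-- single-variable exponential -/
def X {n : ℕ} (j : Fin n) (a : ℚ) : CharRing n := mono (Pi.single j a)

lemma X_mul {n : ℕ} (j : Fin n) (a b : ℚ) : X j a * X j b = X j (a + b) := by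
  simp [X, mono_mul, Pi.single_add]

lemma X_zero {n : ℕ} (j : Fin n) : X j 0 = 1 := by simp [X, mono_zero]

lemma prod_mono {k : ℕ} {ι : Type*} (s : Finset ι) (f : ι → Fin k → ℚ) :
    ∏ i ∈ s, mono (f i) = mono (∑ i ∈ s, f i) := by
  classical
  induction s using Finset.induction_on with
  | empty => simp [mono_zero]
  | insert a s h ih => rw [Finset.prod_insert h, Finset.sum_insert h, ih, mono_mul]

lemma prod_X {n : ℕ} (a : Fin n → ℚ) : ∏ j, X j (a j) = mono a := by
  simp only [X, prod_mono]
  congr 1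
  exact Finset.univ_sum_single a

/-- product of antisymmetrised variables -/
lemma prod_sub_X {n : ℕ} (a : Fin n → ℚ) :
    ∏ j, (X j (a j) - X j (-(a j))) = ∑ s : Fin n → Bool,
      ((-1 : ℤ) ^ (Finset.univ.filter (fun i => s i = true)).card) •
        mono (fun i => (if s i then -1 else 1) * a i) := by
  have h : ∀ j, (X j (a j) - X j (-(a j))) = ∑ b : Bool,
      ((if b then (-1:ℤ) else 1) • X j ((if b then -1 else 1) * a j) : CharRing n) := by
    intro j; simp [sub_eq_neg_add]
  simp_rw [h]
  rw [Finset.prod_univ_sum]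
  simp only [Fintype.piFinset_univ]
  refine Finset.sum_congr rfl fun s _ => ?_
  rw [← prod_X]
  have : ((-1 : ℤ) ^ (Finset.univ.filter (fun i => s i = true)).card) =
      ∏ i, (if s i then (-1:ℤ) else 1) := by
    rw [Finset.prod_ite]; simp
  rw [this]
  simp only [zsmul_eq_mul, Finset.prod_mul_distrib]
  push_cast
  rfl

lemma altY_det (n : ℕ) (v : Fin n → ℚ) :
    altY .B n v = (Matrix.of fun i j => X j (v i) - X j (-(v i))).det := by
  rw [Matrix.det_apply]
  unfold altY
  refine Finset.sum_congr rfl fun σ _ => ?_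
  simp only [Matrix.of_apply]
  rw [prod_sub_X (fun i => v (σ i)), Finset.smul_sum]
  refine Finset.sum_congr rfl fun s _ => ?_
  simp [Units.smul_def, mul_smul]

lemma coeff_prod_sub_X {n : ℕ} (a u : Fin n → ℚ) :
    (∏ j, (X j (a j) - X j (-(a j)))).coeff u =
      ∏ j, ((if a j = u j then (1:ℤ) else 0) - (if -(a j) = u j then 1 else 0)) := by
  rw [prod_sub_X]
  simp only [AddMonoidAlgebra.coeff_sum, Finsupp.finsetSum_apply, AddMonoidAlgebra.coeff_smul,
    Finsupp.smul_apply, mono_coeff, smul_eq_mul]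
  have h : ∀ j, ((if a j = u j then (1:ℤ) else 0) - (if -(a j) = u j then 1 else 0)) = ∑ b : Bool,
      ((if b then (-1:ℤ) else 1) * (if (if b then -1 else 1) * a j = u j then 1 else 0)) := by
    intro j; simp [sub_eq_neg_add]; split_ifs <;> rfl
  simp_rw [h]
  rw [Finset.prod_univ_sum]
  simp only [Fintype.piFinset_univ]
  refine Finset.sum_congr rfl fun s _ => ?_
  have : ((-1 : ℤ) ^ (Finset.univ.filter (fun i => s i = true)).card) =
      ∏ i, (if s i then (-1:ℤ) else 1) := by
    rw [Finset.prod_ite]; simp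
  rw [this, Finset.prod_mul_distrib]
  congr 1
  rw [Finset.prod_ite_zero]
  simp [funext_iff]

/-- integer entry -/
def ent (a c : ℤ) : ℤ := (if a = c then 1 else 0) - (if -a = c then 1 else 0)

/-- reduced alternant, doubled exponents, the last variable specialised to one -/
def Dd (n : ℕ) (m : Fin (n+1) → ℤ) : CharRing n :=
  (Matrix.of fun i j => (Fin.lastCases (m i : CharRing n)
    (fun j' => X j' ((m i : ℚ)/2) - X j' (-((m i : ℚ)/2))) j : CharRing n)).det

/-- integer matrix of coefficients -/
def Nm (n : ℕ) (m : Fin (n+1) → ℤ) (c : Fin n → ℤ) : Matrix (Fin (n+1)) (Fin (n+1)) ℤ :=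
  Matrix.of fun i j => Fin.lastCases (m i) (fun j' => ent (m i) (c j')) j

def half {n : ℕ} (c : Fin n → ℤ) : Fin n → ℚ := fun i => (c i : ℚ)/2

lemma coeff_mul_int {n : ℕ} (F : CharRing n) (z : ℤ) (u) : (F * (z : CharRing n)).coeff u = F.coeff u * z := by
  have : F * (z : CharRing n) = z • F := by rw [zsmul_eq_mul, mul_comm]
  rw [this]; simp only [AddMonoidAlgebra.coeff_smul, Finsupp.smul_apply, smul_eq_mul, mul_comm]

lemma Dd_coeff (n : ℕ) (m : Fin (n+1) → ℤ) (c : Fin n → ℤ) :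
    (Dd n m).coeff (half c) = (Nm n m c).det := by
  unfold Dd Nm
  rw [Matrix.det_apply, Matrix.det_apply]
  simp only [AddMonoidAlgebra.coeff_sum, Finsupp.finsetSum_apply]
  refine Finset.sum_congr rfl fun σ _ => ?_
  simp only [Units.smul_def, AddMonoidAlgebra.coeff_smul,
    Finsupp.smul_apply]
  congr 1
  simp only [Matrix.of_apply, Fin.prod_univ_castSucc, Fin.lastCases_castSucc, Fin.lastCases_last]
  rw [coeff_mul_int, coeff_prod_sub_X (fun j => (m (σ j.castSucc) : ℚ)/2)]
  congr 1
  refine Finset.prod_congr rfl fun j _ => ?_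
  have e1 : ((m (σ j.castSucc) : ℚ)/2 = half c j) ↔ m (σ j.castSucc) = c j := by
    unfold half; constructor
    · intro h; have : (m (σ j.castSucc) : ℚ) = c j := by linarith
      exact_mod_cast this
    · intro h; rw [h]
  have e2 : (-((m (σ j.castSucc) : ℚ)/2) = half c j) ↔ -m (σ j.castSucc) = c j := by
    unfold half; constructor
    · intro h; have : (-m (σ j.castSucc) : ℚ) = c j := by linarith
      exact_mod_cast this
    · intro h; rw [← h]; push_cast; ring
  simp only [ent, e1, e2]

/-- nonzero coefficients of `Dd` -/
lemma Dd_coeff_ne (n : ℕ) (m : Fin (n+1) → ℤ) (u : Fin n → ℚ) (h : (Dd n m).coeff u ≠ 0) :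
    ∃ σ : Equiv.Perm (Fin (n+1)), ∀ j : Fin n, (m (σ j.castSucc) : ℚ)/2 = u j ∨ -((m (σ j.castSucc) : ℚ)/2) = u j := by
  by_contra hc
  push Not at hc
  apply h
  unfold Dd
  rw [Matrix.det_apply]
  simp only [AddMonoidAlgebra.coeff_sum, Finsupp.finsetSum_apply]
  refine Finset.sum_eq_zero fun σ _ => ?_
  simp only [Units.smul_def, AddMonoidAlgebra.coeff_smul, Finsupp.smul_apply]
  simp only [Matrix.of_apply, Fin.prod_univ_castSucc, Fin.lastCases_castSucc, Fin.lastCases_last]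
  rw [coeff_mul_int, coeff_prod_sub_X (fun j => (m (σ j.castSucc) : ℚ)/2)]
  obtain ⟨j, h1, h2⟩ := hc σ
  rw [Finset.prod_eq_zero (Finset.mem_univ j)]
  · simp
  · simp [h1, h2]

end MFProof

namespace MFProof
open Polynomial

def Pp : ℕ → ℤ[X]
  | 0 => 1
  | 1 => Polynomial.X + 1
  | (k+2) => Polynomial.X * Pp (k+1) - Pp k

def Qp : ℕ → ℤ[X]
  | 0 => 0
  | 1 => 1
  | (k+2) => Polynomial.X * Qp (k+1) - Qp k

lemma Pp_spec {A : Type*} [CommRing A] (z w : A) (h : z * w = 1) : ∀ k,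
    z^(2*k+1) - w^(2*k+1) = (z - w) * aeval (z^2+w^2) (Pp k)
  | 0 => by simp [Pp]
  | 1 => by simp [Pp]; linear_combination (z-w)*h
  | (k+2) => by
    have h1 := Pp_spec z w h (k+1)
    have h0 := Pp_spec z w h k
    simp only [Pp, map_sub, map_mul, aeval_X]
    rw [mul_sub, ← h0, mul_left_comm, ← h1]
    have e1 : z^2 * w^(2*(k+1)+1) = w^(2*k+1) := by
      calc _ = (z*w)^2 * w^(2*k+1) := by ring
        _ = _ := by rw [h]; ring
    have e2 : w^2 * z^(2*(k+1)+1) = z^(2*k+1) := by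
      calc _ = (z*w)^2 * z^(2*k+1) := by ring
        _ = _ := by rw [h]; ring
    linear_combination e1 - e2

lemma Qp_spec {A : Type*} [CommRing A] (z w : A) (h : z * w = 1) : ∀ k,
    z^(2*k) - w^(2*k) = (z - w) * ((z+w) * aeval (z^2+w^2) (Qp k))
  | 0 => by simp [Qp]
  | 1 => by simp [Qp]; ring
  | (k+2) => by
    have h1 := Qp_spec z w h (k+1)
    have h0 := Qp_spec z w h k
    simp only [Qp, map_sub, map_mul, aeval_X]
    have e1 : z^2 * w^(2*(k+1)) = w^(2*k) := by
      calc _ = (z*w)^2 * w^(2*k) := by ring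
        _ = _ := by rw [h]; ring
    have e2 : w^2 * z^(2*(k+1)) = z^(2*k) := by
      calc _ = (z*w)^2 * z^(2*k) := by ring
        _ = _ := by rw [h]; ring
    linear_combination e1 - e2 + (z^2+w^2) * h1 - h0

def Us {A : Type*} [CommRing A] (m : ℕ) (z w : A) : A :=
  if m % 2 = 1 then aeval (z^2+w^2) (Pp (m/2)) else (z+w) * aeval (z^2+w^2) (Qp (m/2))

lemma Us_spec {A : Type*} [CommRing A] (m : ℕ) (z w : A) (h : z * w = 1) :
    z^m - w^m = (z - w) * Us m z w := by
  unfold Us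
  split_ifs with hm
  · rw [← Pp_spec z w h]
    have : 2 * (m/2) + 1 = m := by omega
    rw [this]
  · rw [← Qp_spec z w h]
    have : 2 * (m/2) = m := by omega
    rw [this]

lemma Pp_two {A : Type*} [CommRing A] : ∀ k, aeval (1^2+1^2 : A) (Pp k) = 2*k+1
  | 0 => by simp [Pp]
  | 1 => by simp [Pp]; ring
  | (k+2) => by
    simp only [Pp, map_sub, map_mul, aeval_X, Pp_two (k+1), Pp_two k]; push_cast; ring

lemma Qp_two {A : Type*} [CommRing A] : ∀ k, aeval (1^2+1^2 : A) (Qp k) = k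
  | 0 => by simp [Qp]
  | 1 => by simp [Qp]
  | (k+2) => by
    simp only [Qp, map_sub, map_mul, aeval_X, Qp_two (k+1), Qp_two k]; push_cast; ring

lemma Us_one {A : Type*} [CommRing A] (m : ℕ) : Us m (1:A) 1 = m := by
  unfold Us
  split_ifs with hm
  · rw [Pp_two]
    have : 2 * (m/2) + 1 = m := by omega
    conv_rhs => rw [← this]
    push_cast; ring
  · rw [Qp_two]
    have : 2 * (m/2) = m := by omega
    conv_rhs => rw [← this]
    push_cast; ring

lemma Us_map {A B : Type*} [CommRing A] [CommRing B] (φ : A →+* B) (m : ℕ) (z w : A) :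
    φ (Us m z w) = Us m (φ z) (φ w) := by
  have h : ∀ p : ℤ[X], φ (aeval (z^2+w^2) p) = aeval ((φ z)^2+(φ w)^2) p := by
    intro p
    have : (φ.toIntAlgHom) (aeval (z^2+w^2) p) = aeval (φ.toIntAlgHom (z^2+w^2)) p :=
      (Polynomial.aeval_algHom_apply _ _ _).symm
    simpa using this
  unfold Us
  split_ifs
  · exact h _
  · rw [map_mul, h, map_add]

lemma Pp_monic : ∀ k, (Pp k).Monic ∧ (Pp k).natDegree = k
  | 0 => by simp [Pp]
  | 1 => by
    simp only [Pp]
    exact ⟨by simpa using monic_X_add_C (1:ℤ), by simpa using natDegree_X_add_C (1:ℤ)⟩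
  | (k+2) => by
    obtain ⟨a1, b1⟩ := Pp_monic (k+1)
    obtain ⟨a0, b0⟩ := Pp_monic k
    simp only [Pp]
    have m1 : (Polynomial.X * Pp (k+1)).Monic := monic_X.mul a1
    have d1 : (Polynomial.X * Pp (k+1)).natDegree = k + 2 := by
      rw [monic_X.natDegree_mul a1, natDegree_X, b1]; ring
    have lt : (Pp k).natDegree < (Polynomial.X * Pp (k+1)).natDegree := by rw [d1, b0]; omega
    have ltd : (Pp k).degree < (Polynomial.X * Pp (k+1)).degree := degree_lt_degree lt
    exact ⟨m1.sub_of_left ltd, by rw [natDegree_sub_eq_left_of_natDegree_lt lt, d1]⟩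

lemma det_poly_dvd {A : Type*} [CommRing A] [Nontrivial A] (n : ℕ) (y : Fin n → A) (q : Fin n → A[X]) :
    ∃ C : A, (Matrix.of fun i j => (q i).eval (y j)).det = C * (Matrix.vandermonde y).det := by
  set mp : A[X] := ∏ j, (Polynomial.X - C (y j)) with hmp
  have hmon : mp.Monic := monic_prod_of_monic _ _ fun j _ => monic_X_sub_C _
  have hdeg : mp.natDegree = n := by
    rw [hmp, natDegree_prod_of_monic _ _ fun j _ => monic_X_sub_C _]; simp
  refine ⟨(Matrix.of fun i k : Fin n => (q i %ₘ mp).coeff k).det, ?_⟩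
  rw [← Matrix.det_transpose (Matrix.vandermonde y), ← Matrix.det_mul]
  congr 1
  ext i j
  simp only [Matrix.of_apply, Matrix.mul_apply, Matrix.transpose_apply, Matrix.vandermonde_apply]
  have hroot : mp.eval (y j) = 0 := by
    rw [hmp, eval_prod]; exact Finset.prod_eq_zero (Finset.mem_univ j) (by simp)
  have e1 : (q i).eval (y j) = (q i %ₘ mp).eval (y j) := by
    conv_lhs => rw [← modByMonic_add_div (q i) mp]
    simp [hroot]
  rw [e1]
  rcases Nat.eq_zero_or_pos n with h0 | hpos
  · subst h0; exact j.elim0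
  have hlt : (q i %ₘ mp).natDegree < n := by
    rw [← hdeg]; apply natDegree_modByMonic_lt _ hmon
    intro h; rw [h] at hdeg; simp at hdeg; omega
  rw [eval_eq_sum_range' hlt, Finset.sum_range]

def Em {A : Type*} [CommRing A] {n : ℕ} (m : Fin n → ℕ) (z w : Fin n → A) : Matrix (Fin n) (Fin n) A :=
  Matrix.of fun i j => Us (m i) (z j) (w j)

lemma Em_dvd {A : Type*} [CommRing A] [Nontrivial A] (n : ℕ) (m : Fin n → ℕ) (z w : Fin n → A)
    (hm : (∀ i, m i % 2 = 1) ∨ (∀ i, m i % 2 = 0)) :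
    ∃ C : A, (Em m z w).det = C * (Em (fun i : Fin n => 2 * (Fin.rev i : ℕ) + 1) z w).det := by
  set y : Fin n → A := fun j => z j^2 + w j^2
  have hV : ∃ u : A, (Matrix.vandermonde y).det = u * (Em (fun i : Fin n => 2 * (Fin.rev i : ℕ) + 1) z w).det := by
    rw [Matrix.det_eval_matrixOfPolynomials_eq_det_vandermonde y (fun k => (Pp k).map (Int.castRingHom A))
      (fun k => by rw [(Pp_monic k).1.natDegree_map, (Pp_monic k).2]) (fun k => (Pp_monic k).1.map _)]
    rw [← Matrix.det_transpose]
    refine ⟨((Equiv.Perm.sign (Fin.revPerm : Equiv.Perm (Fin n)) : ℤˣ) : ℤ), ?_⟩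
    rw [← Matrix.det_permute]
    congr 1
    ext i j
    simp only [Matrix.transpose_apply, Matrix.of_apply, Matrix.submatrix_apply, Em, Us, Fin.revPerm_apply, Fin.rev_rev]
    rw [if_pos (by omega), show (2 * (i:ℕ) + 1)/2 = i by omega]
    simp [y, aeval_def, eval_map, algebraMap_int_eq]
  obtain ⟨u, hu⟩ := hV
  rcases hm with hm | hm
  · obtain ⟨C, hC⟩ := det_poly_dvd n y (fun i => (Pp (m i / 2)).map (Int.castRingHom A))
    refine ⟨C * u, ?_⟩
    rw [mul_assoc, ← hu, ← hC]
    congr 1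
    ext i j
    simp [Em, Us, hm, y, aeval_def, eval_map, algebraMap_int_eq]
  · obtain ⟨C, hC⟩ := det_poly_dvd n y (fun i => (Qp (m i / 2)).map (Int.castRingHom A))
    refine ⟨(∏ j, (z j + w j)) * (C * u), ?_⟩
    rw [mul_assoc, mul_assoc C, ← hu, ← hC, ← Matrix.det_mul_row]
    congr 1
    ext i j
    simp [Em, Us, hm, y, aeval_def, eval_map, algebraMap_int_eq]

lemma X_half_pow {n : ℕ} (j : Fin n) (m : ℕ) (a : ℚ) : X j a ^ m = X j (m * a) := by
  induction m with
  | zero => simp [X_zero]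
  | succ m ih => rw [pow_succ, ih, X_mul]; congr 1; push_cast; ring

lemma X_sub {n : ℕ} (j : Fin n) (m : ℕ) :
    X j ((m:ℚ)/2) - X j (-((m:ℚ)/2)) = (X j (1/2) - X j (-(1/2))) * Us m (X j (1/2)) (X j (-(1/2))) := by
  rw [← Us_spec _ _ _ (by rw [X_mul]; simp [X_zero]), X_half_pow, X_half_pow]
  congr 2 <;> ring

def drop {n : ℕ} : (Fin (n+1) → ℚ) →+ (Fin n → ℚ) where
  toFun v := fun i => v i.castSucc
  map_zero' := rfl
  map_add' _ _ := rfl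

lemma drop_X_cast {n : ℕ} (j : Fin n) (a : ℚ) : mapR drop (X j.castSucc a) = X j a := by
  rw [X, mapR_mono, X]; congr 1; ext i
  simp [drop, Pi.single_apply]

lemma drop_X_last {n : ℕ} (a : ℚ) : mapR drop (X (Fin.last n) a) = 1 := by
  rw [X, mapR_mono, ← mono_zero]; congr 1; ext i
  simp [drop, Pi.single_apply, Fin.castSucc_ne_last]

lemma altY_Em (n : ℕ) (m : Fin n → ℕ) : altY .B n (fun i => (m i : ℚ)/2) =
    (∏ j : Fin n, (X j (1/2) - X j (-(1/2)))) * (Em m (fun j => X j (1/2)) (fun j => X j (-(1/2)))).det := by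
  rw [altY_det, ← Matrix.det_mul_row]
  congr 1
  ext i j
  simp only [Matrix.of_apply, Em]
  rw [X_sub]

lemma Dd_Em (n : ℕ) (m : Fin (n+1) → ℕ) : Dd n (fun i => (m i : ℤ)) =
    (∏ j : Fin n, (X j (1/2) - X j (-(1/2)))) *
      mapR drop (Em m (fun j => X j (1/2)) (fun j => X j (-(1/2)))).det := by
  rw [RingHom.map_det]
  have : (∏ j : Fin n, (X j (1/2) - X j (-(1/2)))) =
      ∏ j : Fin (n+1), (Fin.lastCases (1 : CharRing n) (fun j' => (X j' (1/2) - X j' (-(1/2)))) j : CharRing n) := by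
    rw [Fin.prod_univ_castSucc]; simp
  rw [this, ← Matrix.det_mul_row]
  unfold Dd
  congr 1
  ext1 i j
  simp only [Matrix.of_apply, Em, RingHom.mapMatrix_apply, Matrix.map_apply, Us_map]
  refine Fin.lastCases ?_ (fun j' => ?_) j
  · simp [drop_X_last, Us_one]
  · simp only [Fin.lastCases_castSucc, drop_X_cast]
    have := X_sub j' (m i)
    push_cast
    exact this

theorem exists_char (n : ℕ) (m : Fin (n+1) → ℕ) (hm : (∀ i, m i % 2 = 1) ∨ (∀ i, m i % 2 = 0)) :
    ∃ f : CharRing (n+1),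
      altY .B (n+1) (fun i : Fin (n+1) => ((2 * (Fin.rev i : ℕ) + 1 : ℕ) : ℚ)/2) * f = altY .B (n+1) (fun i => (m i : ℚ)/2) ∧
      Dd n (fun i : Fin (n+1) => ((2 * (Fin.rev i : ℕ) + 1 : ℕ) : ℤ)) * mapR drop f = Dd n (fun i => (m i : ℤ)) := by
  obtain ⟨C, hC⟩ := Em_dvd (n+1) m (fun j => X j (1/2)) (fun j => X j (-(1/2)) : Fin (n+1) → CharRing (n+1)) hm
  refine ⟨C, ?_, ?_⟩
  · rw [altY_Em, altY_Em, hC]; ring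
  · rw [Dd_Em, Dd_Em, hC, map_mul]; ring

end MFProof

namespace MFProof

lemma rearr (m : Fin 7 → ℤ) (hm : Antitone m) (σ : Equiv.Perm (Fin 7)) (J : Fin 7) :
    ∑ j, (if j ≤ J then (1:ℤ) else 0) * m (σ j) ≤ ∑ j, (if j ≤ J then (1:ℤ) else 0) * m j := by
  apply Monovary.sum_mul_comp_perm_le_sum_mul
  apply Antitone.monovary _ hm
  intro a b hab
  dsimp
  split_ifs <;> omega

def sh (β : Fin 6 → ℤ) : Fin 6 → ℤ := ![β 0, β 1 - β 0, β 2 - β 1, β 3 - β 2, β 4 - β 3, β 5 - β 4]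

lemma Dd_supp (m : Fin 7 → ℤ) (hm : Antitone m) (h0 : ∀ i, 0 ≤ m i)
    (hp : ∀ i j, (m i - m j) % 2 = 0) (u : Fin 6 → ℚ) (h : (Dd 6 m).coeff u ≠ 0) :
    ∃ β : Fin 6 → ℕ, u = half (fun j => m j.castSucc - 2 * sh (fun i => β i) j) := by
  obtain ⟨σ, hσ⟩ := Dd_coeff_ne 6 m u h
  have hc : ∀ j : Fin 6, ∃ c : ℤ, u j = ((m j.castSucc - 2 * c : ℤ) : ℚ)/2 ∧ m j.castSucc - m (σ j.castSucc) ≤ 2 * c := by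
    intro j
    have hpj := hp j.castSucc (σ j.castSucc)
    have h0j := h0 (σ j.castSucc)
    rcases hσ j with h1 | h1
    · refine ⟨(m j.castSucc - m (σ j.castSucc))/2, ?_, by omega⟩
      rw [← h1]; congr 2; omega
    · refine ⟨(m j.castSucc + m (σ j.castSucc))/2, ?_, by omega⟩
      rw [← h1, ← neg_div]; congr 1; rw [← Int.cast_neg]; congr 1; omega
  choose c hc1 hc2 using hc
  have H := rearr m hm σ
  have q0 := hc2 0
  have q1 := hc2 1
  have q2 := hc2 2
  have q3 := hc2 3
  have q4 := hc2 4
  have q5 := hc2 5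
  have r0 := H 0
  have r1 := H 1
  have r2 := H 2
  have r3 := H 3
  have r4 := H 4
  have r5 := H 5
  simp [Fin.sum_univ_succ, Fin.le_def] at r0 r1 r2 r3 r4 r5 q0 q1 q2 q3 q4 q5
  refine ⟨![(c 0).toNat, (c 0 + c 1).toNat, (c 0 + c 1 + c 2).toNat, (c 0 + c 1 + c 2 + c 3).toNat,
    (c 0 + c 1 + c 2 + c 3 + c 4).toNat, (c 0 + c 1 + c 2 + c 3 + c 4 + c 5).toNat], ?_⟩
  ext j
  rw [hc1 j, half]
  congr 3
  fin_cases j <;> simp [sh] <;> omega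

lemma mapR_mul_coeff {k l : ℕ} (φ : (Fin k → ℚ) →+ (Fin l → ℚ)) (f : CharRing k) (g : CharRing l) (p) :
    (mapR φ f * g).coeff p = f.coeff.sum fun ν a => a * g.coeff (p - φ ν) := by
  classical
  induction f using AddMonoidAlgebra.induction_linear with
  | zero => simp
  | add f1 f2 h1 h2 =>
    rw [map_add, add_mul, AddMonoidAlgebra.coeff_add, Finsupp.add_apply, h1, h2, AddMonoidAlgebra.coeff_add,
      Finsupp.sum_add_index']
    · simp
    · intros; ring
  | single v a =>
    have h1 : mapR φ (AddMonoidAlgebra.single v a) = AddMonoidAlgebra.single (φ v) a := by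
      simp [mapR, AddMonoidAlgebra.mapDomain_single]
    rw [h1, mul_comm, AddMonoidAlgebra.coeff_single, Finsupp.sum_single_index (by simp)]
    have h2 := AddMonoidAlgebra.coeff_mul_single_add g a (φ v) (p - φ v)
    rw [sub_add_cancel] at h2
    rw [h2, mul_comm]

lemma mul_coeff {k : ℕ} (f g : CharRing k) (p) :
    (f * g).coeff p = f.coeff.sum fun ν a => a * g.coeff (p - ν) := by
  have h := mapR_mul_coeff (AddMonoidHom.id _) f g p
  have h2 : mapR (AddMonoidHom.id (Fin k → ℚ)) f = f := by
    induction f using AddMonoidAlgebra.induction_linear with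
    | zero => simp
    | add f1 f2 h1 h2 => rw [map_add, h1 (mapR_mul_coeff _ _ _ _), h2 (mapR_mul_coeff _ _ _ _)]
    | single v a => simp [mapR]
  rw [h2] at h
  simpa using h

def rho7 : Fin 7 → ℤ := fun i => ((2 * (Fin.rev i : ℕ) + 1 : ℕ) : ℤ)

def shq (β : Fin 6 → ℕ) : Fin 6 → ℚ := fun j => (sh (fun i => (β i : ℤ)) j : ℚ)

def init6 (m : Fin 7 → ℤ) : Fin 6 → ℚ := half (fun j => m j.castSucc)

lemma half_sub (m : Fin 7 → ℤ) (β : Fin 6 → ℕ) :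
    half (fun j => m j.castSucc - 2 * sh (fun i => (β i : ℤ)) j) = init6 m - shq β := by
  ext j; simp [half, init6, shq]; ring

lemma shq_add (β γ : Fin 6 → ℕ) : shq (β + γ) = shq β + shq γ := by
  ext j; fin_cases j <;> simp [shq, sh] <;> ring

lemma shq_inj {β γ : Fin 6 → ℕ} (h : shq β = shq γ) : β = γ := by
  have h' : ∀ j, sh (fun i => (β i : ℤ)) j = sh (fun i => (γ i : ℤ)) j := by
    intro j; have := congrFun h j; simpa [shq] using this
  have q0 := h' 0
  have q1 := h' 1
  have q2 := h' 2
  have q3 := h' 3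
  have q4 := h' 4
  have q5 := h' 5
  simp [sh] at q0 q1 q2 q3 q4 q5
  ext j; fin_cases j <;> simp <;> omega

lemma shq_zero : shq 0 = 0 := by
  ext j; fin_cases j <;> simp [shq, sh]

def ell (u : Fin 6 → ℚ) : ℚ := 6 * u 0 + 5 * u 1 + 4 * u 2 + 3 * u 3 + 2 * u 4 + u 5

lemma ell_shq (β : Fin 6 → ℕ) : ell (shq β) = ∑ i, (β i : ℚ) := by
  simp [ell, shq, sh, Fin.sum_univ_succ]; ring

lemma ell_add (u v : Fin 6 → ℚ) : ell (u + v) = ell u + ell v := by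
  simp [ell]; ring

lemma rho7_anti : Antitone rho7 := by
  intro a b h; simp [rho7]; have : (a:ℕ) ≤ b := h; omega

lemma Dd_rho_supp (u : Fin 6 → ℚ) (h : (Dd 6 rho7).coeff u ≠ 0) : ∃ β, u = init6 rho7 - shq β := by
  obtain ⟨β, hβ⟩ := Dd_supp rho7 rho7_anti (by intro i; unfold rho7; omega)
    (by intro i j; unfold rho7; omega) u h
  exact ⟨β, by rw [hβ, half_sub]⟩

lemma Nm_top (n : ℕ) (m : Fin (n+1) → ℤ) (hm : StrictAnti m) (h0 : ∀ i, 0 < m i) :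
    (Nm n m (fun j => m j.castSucc)).det = m (Fin.last n) := by
  have key : ∀ i (j : Fin n), ent (m i) (m j.castSucc) = if i = j.castSucc then 1 else 0 := by
    intro i j
    have := h0 i
    have := h0 j.castSucc
    unfold ent
    rw [if_neg (c := -m i = _) (by omega)]
    simp [hm.injective.eq_iff]
  rw [Matrix.det_of_isUpperTriangular]
  · rw [Fin.prod_univ_castSucc]
    simp [Nm, key]
  · intro i j hij
    simp only [id] at hij
    have : j ≠ Fin.last n := by intro h; subst h; exact absurd hij (not_lt.2 (Fin.le_last i))
    obtain ⟨j', rfl⟩ := Fin.exists_castSucc_eq.2 this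
    simp [Nm, key, hij.ne']

lemma rho7_strict : StrictAnti rho7 := by
  intro a b h; simp [rho7]; have : (a:ℕ) < b := h; omega

lemma Dd_top' (n : ℕ) (m : Fin (n+1) → ℤ) (hm : StrictAnti m) (h0 : ∀ i, 0 < m i) :
    (Dd n m).coeff (half fun j => m j.castSucc) = m (Fin.last n) := by
  rw [Dd_coeff, Nm_top n m hm h0]

lemma Dd_top (m : Fin 7 → ℤ) (hm : StrictAnti m) (h0 : ∀ i, 0 < m i) :
    (Dd 6 m).coeff (init6 m) = m (Fin.last 6) := by
  have h : init6 m = half fun j => m j.castSucc := rfl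
  rw [h]
  exact Dd_top' 6 m hm h0

lemma Dd_rho_top : (Dd 6 rho7).coeff (init6 rho7) = 1 := by
  rw [Dd_top rho7 rho7_strict (fun i => by unfold rho7; omega)]
  simp [rho7]

/-- support transfer -/
lemma supp_lemma (f g : CharRing 6) (hfg : Dd 6 rho7 * f = g) (C : Set (Fin 6 → ℚ))
    (hC : ∀ u ∈ C, ∀ β, u - shq β ∈ C) (hg : ∀ u, g.coeff (init6 rho7 + u) ≠ 0 → u ∈ C) :
    ∀ u, f.coeff u ≠ 0 → u ∈ C := by
  classical
  by_contra hcon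
  push Not at hcon
  obtain ⟨u0, hu0, hu0C⟩ := hcon
  let S := f.coeff.support.filter (fun u => u ∉ C)
  have hS : S.Nonempty := ⟨u0, by simp [S, hu0, hu0C]⟩
  obtain ⟨ν, hν, hmax⟩ := S.exists_max_image ell hS
  simp only [S, Finset.mem_filter, Finsupp.mem_support_iff] at hν hmax
  have : g.coeff (init6 rho7 + ν) = f.coeff ν := by
    rw [← hfg, mul_comm, mul_coeff, Finsupp.sum, Finset.sum_eq_single ν]
    · simp [Dd_rho_top]
    · intro ν' hν' hne
      by_contra h0
      have h1 : (Dd 6 rho7).coeff (init6 rho7 + ν - ν') ≠ 0 := fun h => h0 (by rw [h, mul_zero])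
      obtain ⟨β, hβ⟩ := Dd_rho_supp _ h1
      have e1 : ν' = ν + shq β := by
        have := congrArg (fun x => init6 rho7 - x + ν) hβ
        simp at this
        rw [← sub_eq_zero] at this
        rw [← sub_eq_zero, ← this]; abel
      have hb : β ≠ 0 := by rintro rfl; apply hne; rw [e1, shq_zero, add_zero]
      have hpos : 0 < ∑ i, (β i : ℚ) := by
        obtain ⟨i, hi⟩ := Function.ne_iff.1 hb
        apply Finset.sum_pos' (fun _ _ => by positivity) ⟨i, Finset.mem_univ _, ?_⟩
        have : 0 < β i := Nat.pos_of_ne_zero hi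
        exact_mod_cast this
      have hC' : ν' ∈ C := by
        by_contra hn
        have := hmax ν' ⟨by simpa using hν', hn⟩
        rw [e1, ell_add, ell_shq] at this
        linarith
      apply hν.2
      have := hC _ hC' β
      rwa [e1, add_sub_cancel_right] at this
    · intro h; simp at h; simp [h]
  exact hν.2 (hg ν (by rw [this]; exact hν.1))

end MFProof

namespace MFProof

def picks {α : Type*} : List α → List (α × List α)
  | [] => []
  | x :: xs => (x, xs) :: (picks xs).map (fun p => (p.1, x :: p.2))

def ldet {α : Type*} : List α → List (α → ℤ) → ℤ
  | _, [] => 1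
  | rows, c :: cs => ((picks rows).map
      (fun p => if c p.1 = 0 then 0 else c p.1 * ldet p.2 cs)).foldr (fun a b => a - b) 0

lemma picks_ofFn {α : Type*} : ∀ (n : ℕ) (r : Fin (n+1) → α),
    picks (List.ofFn r) = List.ofFn (fun i => (r i, List.ofFn (fun j => r (i.succAbove j))))
  | 0, r => by simp [picks, List.ofFn_succ]
  | n+1, r => by
    rw [List.ofFn_succ, picks, picks_ofFn n, List.map_ofFn, List.ofFn_succ]
    simp [List.ofFn_succ, Fin.succ_succAbove_succ]

lemma asum_ofFn : ∀ (n : ℕ) (t : Fin n → ℤ),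
    (List.ofFn t).foldr (fun a b => a - b) 0 = ∑ i : Fin n, (-1)^(i:ℕ) * t i
  | 0, t => by simp
  | n+1, t => by
    rw [List.ofFn_succ, List.foldr_cons, asum_ofFn n, Fin.sum_univ_succ]
    simp [pow_succ, Finset.sum_neg_distrib, sub_eq_add_neg]

lemma ldet_ofFn {α : Type*} : ∀ (n : ℕ) (r : Fin n → α) (c : Fin n → α → ℤ),
    ldet (List.ofFn r) (List.ofFn c) = (Matrix.of fun i j => c j (r i)).det
  | 0, r, c => by simp [ldet]
  | n+1, r, c => by
    rw [List.ofFn_succ (f := c), ldet, picks_ofFn, List.map_ofFn, asum_ofFn, Matrix.det_succ_column_zero]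
    refine Finset.sum_congr rfl fun i _ => ?_
    simp only [Function.comp]
    rw [ldet_ofFn n]
    simp only [Matrix.of_apply]
    split_ifs with h
    · simp [h]
    · rw [mul_assoc]; rfl

def DL (m c : List ℤ) : ℤ := ldet m (c.map (fun y x => ent x y) ++ [fun x => x])

lemma DL_ofFn (n : ℕ) (m : Fin (n+1) → ℤ) (c : Fin n → ℤ) :
    DL (List.ofFn m) (List.ofFn c) = (Nm n m c).det := by
  have : (List.ofFn c).map (fun y x => ent x y) ++ [fun x => x] =
      List.ofFn (fun j : Fin (n+1) => (Fin.lastCases (fun x => x) (fun j' x => ent x (c j')) j : ℤ → ℤ)) := by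
    rw [List.ofFn_succ', List.concat_eq_append, List.map_ofFn]
    simp
    rfl
  rw [DL, this, ldet_ofFn]
  congr 1
  ext i j
  simp only [Nm, Matrix.of_apply]
  refine Fin.lastCases ?_ (fun j' => ?_) j <;> simp

def AL (q : List ℤ) : ℤ := ldet [(3:ℤ), 2, 1, 0] (q.map (fun y x => if x = y then 1 else 0))

lemma AL_ofFn (q : Fin 4 → ℤ) : (altA 3 (rhoA 3)).coeff (fun t => (q t : ℚ)) = AL (List.ofFn q) := by
  have h1 : [(3:ℤ), 2, 1, 0] = List.ofFn (fun i : Fin 4 => (3:ℤ) - (i:ℕ)) := by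
    simp [List.ofFn_succ]
  rw [AL, h1, List.map_ofFn, ldet_ofFn, altA_coeff, Matrix.det_apply]
  refine Finset.sum_congr rfl fun σ _ => ?_
  simp only [Matrix.of_apply, Units.smul_def, smul_eq_mul, Function.comp]
  congr 1
  rw [Finset.prod_ite_zero]
  simp only [Finset.prod_const_one, Finset.mem_univ, true_implies, funext_iff, rhoA]
  congr 1
  apply propext
  refine forall_congr' fun i => ?_
  constructor
  · intro h; have h' : (((3:ℤ) - ((σ i : ℕ) : ℤ) : ℤ) : ℚ) = q i := by push_cast; exact_mod_cast h
    exact_mod_cast h'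
  · intro h; rw [← h]; push_cast; rfl

def enum : List ℕ → ℕ → List (List ℕ)
  | [], _ => [[]]
  | f :: fs, L => (List.range (L/f+1)).flatMap fun b => (enum fs (L - f*b)).map (fun l => b :: l)

def dotN : List ℕ → List ℕ → ℕ
  | f :: fs, b :: bs => f * b + dotN fs bs
  | _, _ => 0

lemma mem_enum : ∀ (fs bs : List ℕ) (L : ℕ), fs.length = bs.length → (∀ f ∈ fs, 0 < f) →
    dotN fs bs ≤ L → bs ∈ enum fs L
  | [], [], _, _, _, _ => by simp [enum]
  | [], b :: bs, _, h, _, _ => by simp at h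
  | f :: fs, [], _, h, _, _ => by simp at h
  | f :: fs, b :: bs, L, h, hf, hL => by
    simp only [enum, List.mem_flatMap, List.mem_range, List.mem_map]
    simp only [dotN] at hL
    have hf0 : 0 < f := hf f (by simp)
    refine ⟨b, ?_, bs, mem_enum fs bs (L - f*b) (by simpa using h) (fun x hx => hf x (by simp [hx])) (by omega), rfl⟩
    have : b ≤ L / f := by rw [Nat.le_div_iff_mul_le hf0, mul_comm]; omega
    omega

def shL : ℕ → List ℕ → List ℤ
  | _, [] => []
  | p, b :: bs => ((b:ℤ) - (p:ℤ)) :: shL b bs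

lemma shL_ofFn (β : Fin 6 → ℕ) : shL 0 (List.ofFn β) = List.ofFn (sh (fun i => (β i : ℤ))) := by
  simp [List.ofFn_succ, shL, sh]

/-- exponents `m - 2 sh b` -/
def cL (m : List ℤ) (b : List ℕ) : List ℤ := List.zipWith (fun r s => r - 2 * s) m (shL 0 b)

lemma cL_ofFn (m : Fin 7 → ℤ) (β : Fin 6 → ℕ) : cL (List.ofFn m) (List.ofFn β) =
    List.ofFn (fun j : Fin 6 => m j.castSucc - 2 * sh (fun i => (β i : ℤ)) j) := by
  rw [cL, shL_ofFn]
  simp [List.ofFn_succ]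

def rhoL : List ℤ := [13, 11, 9, 7, 5, 3, 1]

lemma rhoL_eq : rhoL = List.ofFn rho7 := by
  simp [List.ofFn_succ, rhoL, rho7, Fin.rev]

lemma DL_coeff (m : Fin 7 → ℤ) (β : Fin 6 → ℕ) :
    DL (List.ofFn m) (cL (List.ofFn m) (List.ofFn β)) = (Dd 6 m).coeff (init6 m - shq β) := by
  rw [cL_ofFn, DL_ofFn, ← Dd_coeff, half_sub]

/-- componentwise difference -/
def subL : List ℕ → List ℕ → Option (List ℕ)
  | a :: as, b :: bs => bif Nat.ble b a then (subL as bs).map (fun l => (a - b) :: l) else none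
  | _, _ => some []

def DrL (b' b : List ℕ) : ℤ :=
  match subL b' b with
  | none => 0
  | some g => DL rhoL (cL rhoL g)

lemma subL_ofFn : ∀ (n : ℕ) (a b : Fin n → ℕ), subL (List.ofFn a) (List.ofFn b) =
    if ∀ i, b i ≤ a i then some (List.ofFn (fun i => a i - b i)) else none
  | 0, a, b => by simp [subL]
  | n+1, a, b => by
    rw [List.ofFn_succ, List.ofFn_succ, subL, subL_ofFn n]
    simp only [Fin.forall_fin_succ, List.ofFn_succ, Bool.cond_eq_ite, Nat.ble_eq]
    split_ifs <;> simp_all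

lemma DrL_ofFn (b' b : Fin 6 → ℕ) : DrL (List.ofFn b') (List.ofFn b) =
    (Dd 6 rho7).coeff (init6 rho7 - shq b' + shq b) := by
  unfold DrL
  rw [subL_ofFn]
  split_ifs with h
  · simp only
    rw [rhoL_eq, DL_coeff]
    congr 1
    have : b' = (fun i => b' i - b i) + b := by ext i; have := h i; simp; omega
    conv_rhs => rw [this, shq_add]
    abel
  · simp only
    by_contra hc
    obtain ⟨γ, hγ⟩ := Dd_rho_supp _ (Ne.symm hc)
    apply h
    have : shq b' = shq (b + γ) := by
      rw [shq_add]
      have := congrArg (fun x => init6 rho7 + shq b - x) hγ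
      simp at this
      rw [← sub_eq_zero] at this ⊢
      rw [← this]
    rw [shq_inj this]
    intro i; simp

end MFProof

namespace MFProof

lemma rearr4 (g m : Fin 4 → ℤ) (hg : Antitone g) (hm : Antitone m) (σ : Equiv.Perm (Fin 4)) :
    ∑ j, g j * m (σ j) ≤ ∑ j, g j * m j :=
  (hg.monovary hm).sum_mul_comp_perm_le_sum_mul

def resA (wm : Fin 4 → Fin 6 → ℤ) : (Fin 6 → ℚ) →+ (Fin 4 → ℚ) where
  toFun ν t := ∑ j, ν j * (wm t j : ℚ)
  map_zero' := by ext; simp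
  map_add' u v := by ext; simp [add_mul, Finset.sum_add_distrib]

def dotZ : List ℤ → List ℤ → ℤ
  | f :: fs, b :: bs => f * b + dotZ fs bs
  | _, _ => 0

def qB (wm : Fin 4 → Fin 6 → ℤ) (κ : Fin 4 → ℤ) (s : List ℤ) : List ℤ :=
  List.ofFn fun t : Fin 4 => 3 - ((t : ℕ) : ℤ) - κ t + dotZ (List.ofFn (wm t)) s

lemma dotZ_ofFn : ∀ (n : ℕ) (a b : Fin n → ℤ), dotZ (List.ofFn a) (List.ofFn b) = ∑ i, a i * b i
  | 0, a, b => by simp [dotZ]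
  | n+1, a, b => by
    rw [List.ofFn_succ, List.ofFn_succ, dotZ, dotZ_ofFn n, Fin.sum_univ_succ]

lemma dotN_ofFn : ∀ (n : ℕ) (a b : Fin n → ℕ), dotN (List.ofFn a) (List.ofFn b) = ∑ i, a i * b i
  | 0, a, b => by simp [dotN]
  | n+1, a, b => by
    rw [List.ofFn_succ, List.ofFn_succ, dotN, dotN_ofFn n, Fin.sum_univ_succ]

def Gf (wm : Fin 4 → Fin 6 → ℤ) (g : Fin 4 → ℤ) (j : Fin 6) : ℤ := ∑ t, g t * wm t j

structure CertOK (wm : Fin 4 → Fin 6 → ℤ) (κ g : Fin 4 → ℤ) (φ : Fin 6 → ℕ) (L : ℕ)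
    (K : List (List ℕ × ℤ)) : Prop where
  hg : ∀ i j : Fin 4, i ≤ j → g j ≤ g i
  hφ : (φ 0 : ℤ) = Gf wm g 0 - Gf wm g 1 ∧ (φ 1 : ℤ) = Gf wm g 1 - Gf wm g 2 ∧
    (φ 2 : ℤ) = Gf wm g 2 - Gf wm g 3 ∧ (φ 3 : ℤ) = Gf wm g 3 - Gf wm g 4 ∧
    (φ 4 : ℤ) = Gf wm g 4 - Gf wm g 5 ∧ (φ 5 : ℤ) = Gf wm g 5
  hpos : ∀ j, 0 < φ j
  hL : ∑ t, g t * κ t = L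
  hK : ∀ x ∈ K, x.1.length = 6 ∧ dotN (List.ofFn φ) x.1 ≤ L
  hchk : ∀ b ∈ enum (List.ofFn φ) L, AL (qB wm κ (shL 0 b)) = (K.map fun x => x.2 * DrL x.1 b).sum

lemma AL_ne (q : Fin 4 → ℤ) (h : AL (List.ofFn q) ≠ 0) :
    ∃ σ : Equiv.Perm (Fin 4), ∀ t, q t = 3 - ((σ t : ℕ) : ℤ) := by
  rw [← AL_ofFn, altA_coeff] at h
  obtain ⟨σ, -, hσ⟩ := Finset.exists_ne_zero_of_sum_ne_zero h
  refine ⟨σ, fun t => ?_⟩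
  have h1 : (fun i => rhoA 3 (σ i)) = fun t => (q t : ℚ) := by
    by_contra hc; simp [hc] at hσ
  have := congrFun h1 t
  simp only [rhoA] at this
  have h2 : ((3 - ((σ t : ℕ) : ℤ) : ℤ) : ℚ) = q t := by push_cast; exact_mod_cast this
  exact_mod_cast h2.symm

lemma list_swap {ι : Type*} (s : Finset ι) (c : ι → ℤ) {α : Type*} (K : List α) (k : α → ℤ)
    (h : α → ι → ℤ) :
    (K.map fun x => k x * ∑ ν ∈ s, c ν * h x ν).sum = ∑ ν ∈ s, c ν * (K.map fun x => k x * h x ν).sum := by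
  induction K with
  | nil => simp
  | cons a K ih =>
    simp only [List.map_cons, List.sum_cons, ih, mul_add, Finset.sum_add_distrib]
    congr 1
    rw [Finset.mul_sum]
    refine Finset.sum_congr rfl fun _ _ => by ring

lemma ofFn_getD (b : List ℕ) (h : b.length = 6) : ∃ β : Fin 6 → ℕ, b = List.ofFn β := by
  refine ⟨fun i => b[i]'(by omega), ?_⟩
  apply List.ext_getElem
  · simp [h]
  · intro i h1 h2; rw [List.getElem_ofFn]; rfl

lemma qB_ofFn (wm κ) (β : Fin 6 → ℕ) : qB wm κ (shL 0 (List.ofFn β)) = List.ofFn fun t : Fin 4 =>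
    3 - ((t : ℕ) : ℤ) - κ t + ∑ j, wm t j * sh (fun i => (β i : ℤ)) j := by
  unfold qB
  rw [shL_ofFn]
  simp only [dotZ_ofFn]

lemma f_supp (f : CharRing 6) (v : Fin 7 → ℤ) (hm : Antitone v) (h0 : ∀ i, 0 ≤ v i)
    (hp : ∀ i j, (v i - v j) % 2 = 0) (hf : Dd 6 rho7 * f = Dd 6 v) (u) (hu : f.coeff u ≠ 0) :
    ∃ β, u = init6 v - init6 rho7 - shq β := by
  refine supp_lemma f _ hf {u | ∃ β, u = init6 v - init6 rho7 - shq β} ?_ ?_ u hu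
  · rintro u ⟨β, rfl⟩ γ
    exact ⟨β + γ, by rw [shq_add]; abel⟩
  · intro u hu
    obtain ⟨β, hβ⟩ := Dd_supp v hm h0 hp _ hu
    refine ⟨β, ?_⟩
    rw [half_sub] at hβ
    rw [sub_right_comm, ← hβ]; abel

theorem cert {wm κ g φ L K} (H : CertOK wm κ g φ L K) (f : CharRing 6) (v : Fin 7 → ℤ) (hm : Antitone v)
    (h0 : ∀ i, 0 ≤ v i)
    (hp : ∀ i j, (v i - v j) % 2 = 0) (hf : Dd 6 rho7 * f = Dd 6 v) :
    (mapR (resA wm) f * altA 3 (rhoA 3)).coeff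
      (resA wm (init6 v - init6 rho7) + rhoA 3 - fun t => (κ t : ℚ)) =
    (K.map fun x => x.2 * DL (List.ofFn v) (cL (List.ofFn v) x.1)).sum := by
  have hR : ∀ x ∈ K, x.2 * DL (List.ofFn v) (cL (List.ofFn v) x.1) =
      x.2 * ∑ ν ∈ f.coeff.support, f.coeff ν *
        (Dd 6 rho7).coeff (init6 v - shq (fun i => x.1.getD i 0) - ν) := by
    intro x hx
    obtain ⟨β, hβ⟩ := ofFn_getD x.1 (H.hK x hx).1
    have hβ' : (fun i : Fin 6 => x.1.getD i 0) = β := by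
      ext i; rw [hβ]; simp [-List.ofFn_succ]
    rw [hβ', hβ, DL_coeff, ← hf, mul_comm (Dd 6 rho7), mul_coeff]; rfl
  rw [List.map_congr_left hR, list_swap, mapR_mul_coeff, Finsupp.sum]
  refine Finset.sum_congr rfl fun ν hν => ?_
  obtain ⟨β, rfl⟩ := f_supp f v hm h0 hp hf ν (by simpa using hν)
  congr 1
  have e1 : (resA wm (init6 v - init6 rho7) + rhoA 3 - fun t => (κ t : ℚ)) - resA wm (init6 v - init6 rho7 - shq β)
      = fun t : Fin 4 => (((3 : ℤ) - ((t : ℕ) : ℤ) - κ t + ∑ j, wm t j * sh (fun i => (β i : ℤ)) j : ℤ) : ℚ) := by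
    rw [map_sub _ (init6 v - init6 rho7)]
    ext t
    have : resA wm (shq β) t = ∑ j, (wm t j : ℚ) * (sh (fun i => (β i : ℤ)) j : ℚ) := by
      simp [resA, shq, mul_comm]
    simp only [Pi.add_apply, Pi.sub_apply, this, rhoA]
    push_cast
    ring
  rw [e1, AL_ofFn]
  have e2 : ∀ x ∈ K, x.2 * (Dd 6 rho7).coeff (init6 v - shq (fun i => x.1.getD i 0) - (init6 v - init6 rho7 - shq β)) =
      x.2 * DrL x.1 (List.ofFn β) := by
    intro x hx
    obtain ⟨γ, hβ⟩ := ofFn_getD x.1 (H.hK x hx).1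
    have hβ' : (fun i : Fin 6 => x.1.getD i 0) = γ := by
      ext i; rw [hβ]; simp [-List.ofFn_succ]
    rw [hβ', hβ, DrL_ofFn]; congr 2; abel
  rw [List.map_congr_left e2, ← qB_ofFn]
  by_cases hβ : dotN (List.ofFn φ) (List.ofFn β) ≤ L
  · exact H.hchk _ (mem_enum _ _ _ (by simp) (by intro x hx; obtain ⟨j, rfl⟩ := (List.mem_ofFn' _ _).1 hx; exact H.hpos j) hβ)
  · have z1 : AL (qB wm κ (shL 0 (List.ofFn β))) = 0 := by
      by_contra hc
      apply hβ
      rw [qB_ofFn] at hc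
      obtain ⟨σ, hσ⟩ := AL_ne _ hc
      have hr := rearr4 g (fun t => 3 - ((t:ℕ):ℤ)) (fun a b h => H.hg a b h)
        (fun a b h => by have : (a:ℕ) ≤ b := h; dsimp; omega) σ
      simp only [← hσ] at hr
      have hL := H.hL
      obtain ⟨p0, p1, p2, p3, p4, p5⟩ := H.hφ
      rw [dotN_ofFn]
      zify
      rw [← hL]
      simp only [Gf] at p0 p1 p2 p3 p4 p5
      simp only [Fin.sum_univ_six, p0, p1, p2, p3, p4, p5]
      simp only [Fin.sum_univ_four, Fin.sum_univ_six, sh, Matrix.cons_val] at hr ⊢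
      linarith
    have z2 : ∀ x ∈ K, x.2 * DrL x.1 (List.ofFn β) = 0 := by
      intro x hx
      obtain ⟨γ, hγ⟩ := ofFn_getD x.1 (H.hK x hx).1
      have hx2 := (H.hK x hx).2
      rw [hγ] at hx2 ⊢
      unfold DrL
      rw [subL_ofFn, if_neg]
      · simp
      · intro hle
        apply hβ
        refine le_trans ?_ hx2
        rw [dotN_ofFn, dotN_ofFn]
        exact Finset.sum_le_sum fun i _ => Nat.mul_le_mul_left _ (hle i)
    rw [z1, List.map_congr_left z2]
    simp

end MFProof

namespace MFProof

def wO1 : Fin 4 → Fin 6 → ℤ := ![![1, 0, 0, 1, 1, 0], ![0, 1, 0, 0, -1, 1], ![0, 0, 1, -1, 0, -1], ![-1, -1, -1, 0, 0, 0]]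

def KA6 : List (List ℕ × ℤ) := [
  ([0,0,0,0,0,1], 1), ([0,0,0,1,0,0], 1), ([0,1,0,0,0,0], 1), ([0,0,0,0,0,0], 4)]

lemma certA6 : CertOK wO1 ![0, 1, -1, 0] ![7, 5, 4, 0] ![2, 1, 1, 1, 1, 1] 1 KA6 := by
  constructor <;> decide +kernel

def KA5 : List (List ℕ × ℤ) := [
  ([0,0,0,0,1,1], 1), ([0,0,0,1,1,0], 1), ([0,1,0,0,1,0], 1), ([1,0,0,0,0,0], 1), 
  ([0,0,0,0,0,1], 1), ([0,0,0,0,1,0], 4), ([0,0,0,1,0,0], 1), ([0,1,0,0,0,0], 1), 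
  ([0,0,0,0,0,0], 8)]

lemma certA5 : CertOK wO1 ![1, -1, 0, 0] ![7, 5, 4, 0] ![2, 1, 1, 1, 1, 1] 2 KA5 := by
  constructor <;> decide +kernel

def wO2 : Fin 4 → Fin 6 → ℤ := ![![1, 0, 1, 0, 0, 1], ![0, 1, 0, 1, 0, -1], ![0, 0, -1, -1, 1, 0], ![-1, -1, 0, 0, -1, 0]]

def KA4 : List (List ℕ × ℤ) := [
  ([0,0,0,1,1,1], 1), ([0,0,1,1,1,0], 1), ([0,1,0,1,0,1], 1), ([0,1,1,1,0,0], 1), 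
  ([1,0,0,1,1,0], 1), ([1,1,0,1,0,0], 1), ([0,0,0,0,1,1], 1), ([0,0,0,1,0,1], 2), 
  ([0,0,0,1,1,0], 4), ([0,0,1,0,1,0], 1), ([0,0,1,1,0,0], 2), ([0,1,0,0,0,1], 1), 
  ([0,1,0,1,0,0], 4), ([0,1,1,0,0,0], 1), ([1,0,0,0,1,0], 1), ([1,0,0,1,0,0], 2), 
  ([1,1,0,0,0,0], 1), ([0,0,0,0,0,1], 3), ([0,0,0,0,1,0], 5), ([0,0,0,1,0,0], 12), 
  ([0,0,1,0,0,0], 3), ([0,1,0,0,0,0], 5), ([1,0,0,0,0,0], 3), ([0,0,0,0,0,0], 22)]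

lemma certA4 : CertOK wO2 ![0, 1, -1, 0] ![6, 5, 2, 0] ![1, 1, 1, 1, 1, 1] 3 KA4 := by
  constructor <;> decide +kernel

def KA23 : List (List ℕ × ℤ) := [
  ([0,0,1,0,0,1], 1), ([0,0,1,1,0,0], 1), ([0,1,1,0,0,0], 1), ([0,0,0,0,0,1], 1), 
  ([0,0,0,1,0,0], 1), ([0,0,1,0,0,0], 4), ([0,1,0,0,0,0], 1), ([0,0,0,0,0,0], 6)]

lemma certA23 : CertOK wO1 ![-1, 1, 1, -1] ![7, 5, 4, 0] ![2, 1, 1, 1, 1, 1] 2 KA23 := by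
  constructor <;> decide +kernel

def KA13 : List (List ℕ × ℤ) := [
  ([0,0,1,0,1,2], 1), ([0,0,1,1,1,1], 1), ([0,0,1,2,1,0], 1), ([0,1,1,0,1,1], 1), 
  ([0,1,1,1,1,0], 1), ([0,2,1,0,1,0], 1), ([1,0,1,0,0,1], 1), ([1,0,1,1,0,0], 1), 
  ([1,1,1,0,0,0], 1), ([0,0,0,0,1,2], 1), ([0,0,0,1,1,1], 1), ([0,0,0,2,1,0], 1), 
  ([0,0,1,0,0,2], 1), ([0,0,1,0,1,1], 4), ([0,0,1,1,0,1], 1), ([0,0,1,1,1,0], 4), 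
  ([0,0,1,2,0,0], 1), ([0,1,0,0,1,1], 1), ([0,1,0,1,1,0], 1), ([0,1,1,0,0,1], 1), 
  ([0,1,1,0,1,0], 4), ([0,1,1,1,0,0], 1), ([0,2,0,0,1,0], 1), ([0,2,1,0,0,0], 1), 
  ([1,0,0,0,0,1], 1), ([1,0,0,1,0,0], 1), ([1,0,1,0,0,0], 4), ([1,1,0,0,0,0], 1), 
  ([0,0,0,0,0,2], 1), ([0,0,0,0,1,1], 6), ([0,0,0,1,0,1], 1), ([0,0,0,1,1,0], 6), 
  ([0,0,0,2,0,0], 1), ([0,0,1,0,0,1], 8), ([0,0,1,0,1,0], 10), ([0,0,1,1,0,0], 8), 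
  ([0,1,0,0,0,1], 1), ([0,1,0,0,1,0], 6), ([0,1,0,1,0,0], 1), ([0,1,1,0,0,0], 8), 
  ([0,2,0,0,0,0], 1), ([1,0,0,0,0,0], 6), ([0,0,0,0,0,1], 11), ([0,0,0,0,1,0], 19), 
  ([0,0,0,1,0,0], 11), ([0,0,1,0,0,0], 30), ([0,1,0,0,0,0], 11), ([0,0,0,0,0,0], 55)]

lemma certA13 : CertOK wO1 ![0, 0, 1, -1] ![7, 5, 4, 0] ![2, 1, 1, 1, 1, 1] 4 KA13 := by
  constructor <;> decide +kernel

def KA33 : List (List ℕ × ℤ) := [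
  ([0,0,2,0,0,2], 1), ([0,0,2,1,0,1], 1), ([0,0,2,2,0,0], 1), ([0,1,2,0,0,1], 1), 
  ([0,1,2,1,0,0], 1), ([0,2,2,0,0,0], 1), ([0,0,1,0,0,2], 1), ([0,0,1,1,0,1], 1), 
  ([0,0,1,2,0,0], 1), ([0,0,2,0,0,1], 4), ([0,0,2,1,0,0], 4), ([0,1,1,0,0,1], 1), 
  ([0,1,1,1,0,0], 1), ([0,1,2,0,0,0], 4), ([0,2,1,0,0,0], 1), ([0,0,0,0,0,2], 1), 
  ([0,0,0,1,0,1], 1), ([0,0,0,2,0,0], 1), ([0,0,1,0,0,1], 6), ([0,0,1,1,0,0], 6), 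
  ([0,0,2,0,0,0], 10), ([0,1,0,0,0,1], 1), ([0,1,0,1,0,0], 1), ([0,1,1,0,0,0], 6), 
  ([0,2,0,0,0,0], 1), ([0,0,0,0,0,1], 6), ([0,0,0,1,0,0], 6), ([0,0,1,0,0,0], 19), 
  ([0,1,0,0,0,0], 6), ([0,0,0,0,0,0], 22)]

lemma certA33 : CertOK wO1 ![-2, 2, 2, -2] ![7, 5, 4, 0] ![2, 1, 1, 1, 1, 1] 4 KA33 := by
  constructor <;> decide +kernel

def wO3 : Fin 4 → Fin 6 → ℤ := ![![1, 0, 1, 0, 1, 0], ![0, 1, 0, 0, -1, 1], ![0, 0, -1, 1, 0, -1], ![-1, -1, 0, -1, 0, 0]]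

def KA12 : List (List ℕ × ℤ) := [
  ([0,0,0,1,1,2], 1), ([0,0,1,2,1,1], 1), ([0,0,2,3,1,0], 1), ([0,1,0,0,1,2], 1), 
  ([0,1,1,1,1,1], 1), ([0,1,2,2,1,0], 1), ([0,2,1,0,1,1], 1), ([0,2,2,1,1,0], 1), 
  ([0,3,2,0,1,0], 1), ([1,0,0,1,0,1], 1), ([1,0,1,2,0,0], 1), ([1,1,0,0,0,1], 1), 
  ([1,1,1,1,0,0], 1), ([1,2,1,0,0,0], 1), ([0,0,0,0,1,2], 2), ([0,0,0,1,0,2], 1), 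
  ([0,0,0,2,1,1], 1), ([0,0,1,1,1,1], 2), ([0,0,1,2,0,1], 1), ([0,0,1,3,1,0], 1), 
  ([0,0,2,2,1,0], 2), ([0,0,2,3,0,0], 1), ([0,1,0,0,0,2], 1), ([0,1,0,1,1,1], 1), 
  ([0,1,1,0,1,1], 2), ([0,1,1,1,0,1], 1), ([0,1,1,2,1,0], 1), ([0,1,2,1,1,0], 2), 
  ([0,1,2,2,0,0], 1), ([0,2,0,0,1,1], 1), ([0,2,1,0,0,1], 1), ([0,2,1,1,1,0], 1), 
  ([0,2,2,0,1,0], 2), ([0,2,2,1,0,0], 1), ([0,3,1,0,1,0], 1), ([0,3,2,0,0,0], 1), 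
  ([1,0,0,0,0,1], 2), ([1,0,0,2,0,0], 1), ([1,0,1,1,0,0], 2), ([1,1,0,1,0,0], 1), 
  ([1,1,1,0,0,0], 2), ([1,2,0,0,0,0], 1), ([0,0,0,0,0,2], 3), ([0,0,0,1,1,1], 6), 
  ([0,0,0,2,0,1], 1), ([0,0,0,3,1,0], 1), ([0,0,1,0,1,1], 3), ([0,0,1,1,0,1], 3), 
  ([0,0,1,2,1,0], 6), ([0,0,1,3,0,0], 1), ([0,0,2,1,1,0], 3), ([0,0,2,2,0,0], 3), 
  ([0,1,0,0,1,1], 6), ([0,1,0,1,0,1], 1), ([0,1,0,2,1,0], 1), ([0,1,1,0,0,1], 3), 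
  ([0,1,1,1,1,0], 6), ([0,1,1,2,0,0], 1), ([0,1,2,0,1,0], 3), ([0,1,2,1,0,0], 3), 
  ([0,2,0,0,0,1], 1), ([0,2,0,1,1,0], 1), ([0,2,1,0,1,0], 6), ([0,2,1,1,0,0], 1), 
  ([0,2,2,0,0,0], 3), ([0,3,0,0,1,0], 1), ([0,3,1,0,0,0], 1), ([1,0,0,1,0,0], 6), 
  ([1,0,1,0,0,0], 3), ([1,1,0,0,0,0], 6), ([0,0,0,0,1,1], 12), ([0,0,0,1,0,1], 11), 
  ([0,0,0,2,1,0], 6), ([0,0,0,3,0,0], 1), ([0,0,1,0,0,1], 5), ([0,0,1,1,1,0], 12), 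
  ([0,0,1,2,0,0], 11), ([0,0,2,0,1,0], 4), ([0,0,2,1,0,0], 5), ([0,1,0,0,0,1], 11), 
  ([0,1,0,1,1,0], 6), ([0,1,0,2,0,0], 1), ([0,1,1,0,1,0], 12), ([0,1,1,1,0,0], 11), 
  ([0,1,2,0,0,0], 5), ([0,2,0,0,1,0], 6), ([0,2,0,1,0,0], 1), ([0,2,1,0,0,0], 11), 
  ([0,3,0,0,0,0], 1), ([1,0,0,0,0,0], 12), ([0,0,0,0,0,1], 30), ([0,0,0,1,1,0], 22), 
  ([0,0,0,2,0,0], 11), ([0,0,1,0,1,0], 18), ([0,0,1,1,0,0], 30), ([0,0,2,0,0,0], 7), 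
  ([0,1,0,0,1,0], 22), ([0,1,0,1,0,0], 11), ([0,1,1,0,0,0], 30), ([0,2,0,0,0,0], 11), 
  ([0,0,0,0,1,0], 42), ([0,0,0,1,0,0], 60), ([0,0,1,0,0,0], 50), ([0,1,0,0,0,0], 60), 
  ([0,0,0,0,0,0], 148)]

lemma certA12 : CertOK wO3 ![0, 1, 0, -1] ![9, 6, 4, 0] ![3, 1, 1, 1, 1, 2] 6 KA12 := by
  constructor <;> decide +kernel

end MFProof

namespace MFProof

def HK (K : List (List ℕ × ℤ)) (v : List ℤ) : ℤ := (K.map fun x => x.2 * DL v (cL v x.1)).sum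

lemma trunc (v v' : Fin 7 → ℤ) (M : ℕ) (h0 : ∀ i, 0 < v i) (h0' : ∀ i, 0 < v' i) (h6 : v (Fin.last 6) = v' (Fin.last 6))
    (hd : ∀ i j, i ≤ j → (v i - v j = v' i - v' j) ∨ (2 * M < v i - v j ∧ 2 * M < v' i - v' j))
    (β : Fin 6 → ℕ) (hβ : ∀ i, β i ≤ M) :
    DL (List.ofFn v) (cL (List.ofFn v) (List.ofFn β)) = DL (List.ofFn v') (cL (List.ofFn v') (List.ofFn β)) := by
  rw [cL_ofFn, cL_ofFn, DL_ofFn, DL_ofFn, Matrix.det_apply, Matrix.det_apply]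
  have hs : ∀ j, -(M:ℤ) ≤ sh (fun i => (β i : ℤ)) j ∧ sh (fun i => (β i : ℤ)) j ≤ M := by
    have b0 := hβ 0
    have b1 := hβ 1
    have b2 := hβ 2
    have b3 := hβ 3
    have b4 := hβ 4
    have b5 := hβ 5
    intro j
    fin_cases j <;> simp [sh] <;> omega
  have hent : ∀ i (j : Fin 6), ent (v i) (v j.castSucc - 2 * sh (fun i => (β i : ℤ)) j) =
      ent (v' i) (v' j.castSucc - 2 * sh (fun i => (β i : ℤ)) j) := by
    intro i j
    have a1 := hs j
    have a2 := h0 i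
    have a3 := h0' i
    have a4 := h0 j.castSucc
    have a5 := h0' j.castSucc
    have a6 := hd i (Fin.last 6) (Fin.le_last _)
    have a7 := hd j.castSucc (Fin.last 6) (Fin.le_last _)
    have a8 := h0 (Fin.last 6)
    have e1 : (v i = v j.castSucc - 2 * sh (fun i => (β i : ℤ)) j) ↔ (v' i = v' j.castSucc - 2 * sh (fun i => (β i : ℤ)) j) := by
      rcases le_total i j.castSucc with h | h
      · have := hd _ _ h
        omega
      · have := hd _ _ h
        omega
    have e2 : (-v i = v j.castSucc - 2 * sh (fun i => (β i : ℤ)) j) ↔ (-v' i = v' j.castSucc - 2 * sh (fun i => (β i : ℤ)) j) := by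
      omega
    unfold ent
    simp only [e1, e2]
  refine Finset.sum_congr rfl fun σ _ => ?_
  congr 1
  simp only [Nm, Matrix.of_apply]
  rw [Fin.prod_univ_castSucc (n := 6), Fin.prod_univ_castSucc (n := 6)]
  simp only [Fin.lastCases_castSucc, Fin.lastCases_last, hent]
  by_cases hz : ∏ j : Fin 6, ent (v' (σ j.castSucc)) (v' j.castSucc - 2 * sh (fun i => (β i : ℤ)) j) = 0
  · rw [hz]; simp
  · congr 1
    have hle : ∀ j : Fin 6, v j.castSucc - 2 * sh (fun i => (β i : ℤ)) j ≤ v (σ j.castSucc) := by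
      intro j
      have h1 := Finset.prod_ne_zero_iff.1 hz j (Finset.mem_univ j)
      rw [← hent] at h1
      have h2 := h0 (σ j.castSucc)
      unfold ent at h1
      by_contra hc
      apply h1
      rw [if_neg (by omega), if_neg (by omega)]; rfl
    have hsum := Equiv.sum_comp σ v
    rw [Fin.sum_univ_castSucc, Fin.sum_univ_castSucc v] at hsum
    have h2 := Finset.sum_le_sum (fun j (_ : j ∈ Finset.univ) => hle j)
    rw [Finset.sum_sub_distrib] at h2
    have h3 : ∑ j, 2 * sh (fun i => (β i : ℤ)) j = 2 * β 5 := by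
      simp [Fin.sum_univ_six, sh]; ring
    have h4 := hβ 5
    have h5 := hd (σ (Fin.last 6)) (Fin.last 6) (Fin.le_last _)
    omega

def vF (a0 a1 a2 a3 a4 a5 : ℕ) : Fin 7 → ℤ := ![13 + 2 * (a0+a1+a2+a3+a4+a5 : ℕ), 11 + 2 * (a1+a2+a3+a4+a5 : ℕ),
  9 + 2 * (a2+a3+a4+a5 : ℕ), 7 + 2 * (a3+a4+a5 : ℕ), 5 + 2 * (a4+a5 : ℕ), 3 + 2 * (a5 : ℕ), 1]

def vL (a0 a1 a2 a3 a4 a5 : ℕ) : List ℤ := [13 + 2 * (a0+a1+a2+a3+a4+a5 : ℕ), 11 + 2 * (a1+a2+a3+a4+a5 : ℕ),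
  9 + 2 * (a2+a3+a4+a5 : ℕ), 7 + 2 * (a3+a4+a5 : ℕ), 5 + 2 * (a4+a5 : ℕ), 3 + 2 * (a5 : ℕ), 1]

lemma vL_eq (a0 a1 a2 a3 a4 a5 : ℕ) : vL a0 a1 a2 a3 a4 a5 = List.ofFn (vF a0 a1 a2 a3 a4 a5) := by
  simp [vL, vF, List.ofFn_succ]

lemma dich (v v' : Fin 7 → ℤ) (M : ℕ)
    (h : ∀ i : Fin 6, (v i.castSucc - v i.succ = v' i.castSucc - v' i.succ ∨
      (2 * M < v i.castSucc - v i.succ ∧ 2 * M < v' i.castSucc - v' i.succ)) ∧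
      v i.succ ≤ v i.castSucc ∧ v' i.succ ≤ v' i.castSucc) :
    ∀ i j, i ≤ j → (v i - v j = v' i - v' j) ∨ (2 * M < v i - v j ∧ 2 * M < v' i - v' j) := by
  intro i j hij
  let r : ℤ × ℤ → ℤ × ℤ → Prop := fun a b => (a.1 - b.1 = a.2 - b.2 ∨ (2 * M < a.1 - b.1 ∧ 2 * M < a.2 - b.2)) ∧
    b.1 ≤ a.1 ∧ b.2 ≤ a.2
  haveI : IsTrans (ℤ × ℤ) r := ⟨fun a b c h1 h2 => by
    obtain ⟨h1, h3, h4⟩ := h1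
    obtain ⟨h2, h5, h6⟩ := h2
    refine ⟨?_, by omega, by omega⟩
    omega⟩
  rcases hij.lt_or_eq with hl | rfl
  · exact ((Fin.liftFun_iff_succ r (f := fun i => (v i, v' i))).2 (fun i => h i) hl).1
  · left; ring

lemma HK_trunc (K : List (List ℕ × ℤ)) (M a0 a1 a2 a3 a4 a5 : ℕ)
    (hK : ∀ x ∈ K, x.1.length = 6 ∧ ∀ b ∈ x.1, b ≤ M) :
    HK K (vL a0 a1 a2 a3 a4 a5) =
    HK K (vL (min a0 M) (min a1 M) (min a2 M) (min a3 M) (min a4 M) (min a5 M)) := by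
  unfold HK
  congr 1
  apply List.map_congr_left
  intro x hx
  obtain ⟨h1, h2⟩ := hK x hx
  obtain ⟨β, hβ⟩ := ofFn_getD x.1 h1
  congr 1
  rw [hβ, vL_eq, vL_eq]
  apply trunc _ _ M
  · intro i; fin_cases i <;> simp [vF] <;> omega
  · intro i; fin_cases i <;> simp only [vF] <;> simp only [Fin.reduceFinMk, Fin.zero_eta, Fin.isValue, Matrix.cons_val] <;> omega
  · rfl
  · have d0 : min a0 M = a0 ∨ (min a0 M = M ∧ M < a0) := by omega
    have d1 : min a1 M = a1 ∨ (min a1 M = M ∧ M < a1) := by omega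
    have d2 : min a2 M = a2 ∨ (min a2 M = M ∧ M < a2) := by omega
    have d3 : min a3 M = a3 ∨ (min a3 M = M ∧ M < a3) := by omega
    have d4 : min a4 M = a4 ∨ (min a4 M = M ∧ M < a4) := by omega
    have d5 : min a5 M = a5 ∨ (min a5 M = M ∧ M < a5) := by omega
    generalize min a0 M = c0 at *
    generalize min a1 M = c1 at *
    generalize min a2 M = c2 at *
    generalize min a3 M = c3 at *
    generalize min a4 M = c4 at *
    generalize min a5 M = c5 at *
    clear h1 h2 hβ hx
    apply dich
    intro i
    fin_cases i <;> simp only [vF, Fin.reduceFinMk, Fin.zero_eta, Fin.isValue, Matrix.cons_val, Fin.castSucc_zero,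
      Fin.reduceCastSucc, Fin.reduceSucc, Fin.succ_zero_eq_one] <;> omega
  · intro i; apply h2; rw [hβ]; simp [-List.ofFn_succ, List.mem_ofFn]

end MFProof

namespace MFProof

lemma boxA6 : ∀ a < 2, ∀ b < 2, ∀ c < 2, ∀ d < 2, ∀ e < 2, 2 ≤ HK KA6 (vL a b c d e 1) := by decide +kernel
lemma boxA5 : ∀ a < 2, ∀ b < 2, ∀ c < 2, ∀ d < 2, 2 ≤ HK KA5 (vL a b c d 1 0) := by decide +kernel
lemma boxA4 : ∀ a < 2, ∀ b < 2, ∀ c < 2, 2 ≤ HK KA4 (vL a b c 1 0 0) := by decide +kernel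
lemma boxA23 : ∀ a < 2, 2 ≤ HK KA23 (vL a 1 1 0 0 0) := by decide +kernel
lemma boxA13 : ∀ a < 3, ∀ c < 3, 1 ≤ a → 1 ≤ c → 2 ≤ HK KA13 (vL a 0 c 0 0 0) := by decide +kernel
lemma boxA33 : 2 ≤ HK KA33 (vL 0 0 2 0 0 0) := by decide +kernel
lemma boxA12 : ∀ a < 4, ∀ b < 4, 1 ≤ b → (1 ≤ a ∨ 2 ≤ b) → 2 ≤ HK KA12 (vL a b 0 0 0 0) := by decide +kernel

lemma chkA6 : ∀ x ∈ KA6, x.1.length = 6 ∧ ∀ b ∈ x.1, b ≤ 1 := by decide +kernel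
lemma chkA5 : ∀ x ∈ KA5, x.1.length = 6 ∧ ∀ b ∈ x.1, b ≤ 1 := by decide +kernel
lemma chkA4 : ∀ x ∈ KA4, x.1.length = 6 ∧ ∀ b ∈ x.1, b ≤ 1 := by decide +kernel
lemma chkA23 : ∀ x ∈ KA23, x.1.length = 6 ∧ ∀ b ∈ x.1, b ≤ 1 := by decide +kernel
lemma chkA13 : ∀ x ∈ KA13, x.1.length = 6 ∧ ∀ b ∈ x.1, b ≤ 2 := by decide +kernel
lemma chkA33 : ∀ x ∈ KA33, x.1.length = 6 ∧ ∀ b ∈ x.1, b ≤ 2 := by decide +kernel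
lemma chkA12 : ∀ x ∈ KA12, x.1.length = 6 ∧ ∀ b ∈ x.1, b ≤ 3 := by decide +kernel

lemma bigA6 (a b c d e f : ℕ) (h : 1 ≤ f) : 2 ≤ HK KA6 (vL a b c d e f) := by
  rw [HK_trunc KA6 1 _ _ _ _ _ _ chkA6, min_eq_right h]
  exact boxA6 _ (by omega) _ (by omega) _ (by omega) _ (by omega) _ (by omega)
lemma bigA5 (a b c d e : ℕ) (h : 1 ≤ e) : 2 ≤ HK KA5 (vL a b c d e 0) := by
  rw [HK_trunc KA5 1 _ _ _ _ _ _ chkA5, min_eq_right h]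
  exact boxA5 _ (by omega) _ (by omega) _ (by omega) _ (by omega)
lemma bigA4 (a b c d : ℕ) (h : 1 ≤ d) : 2 ≤ HK KA4 (vL a b c d 0 0) := by
  rw [HK_trunc KA4 1 _ _ _ _ _ _ chkA4, min_eq_right h]
  exact boxA4 _ (by omega) _ (by omega) _ (by omega)
lemma bigA23 (a b c : ℕ) (h : 1 ≤ b) (h' : 1 ≤ c) : 2 ≤ HK KA23 (vL a b c 0 0 0) := by
  rw [HK_trunc KA23 1 _ _ _ _ _ _ chkA23, min_eq_right h, min_eq_right h']
  exact boxA23 _ (by omega)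
lemma bigA13 (a c : ℕ) (h : 1 ≤ a) (h' : 1 ≤ c) : 2 ≤ HK KA13 (vL a 0 c 0 0 0) := by
  rw [HK_trunc KA13 2 _ _ _ _ _ _ chkA13]
  exact boxA13 _ (by omega) _ (by omega) (by omega) (by omega)
lemma bigA33 (c : ℕ) (h' : 2 ≤ c) : 2 ≤ HK KA33 (vL 0 0 c 0 0 0) := by
  rw [HK_trunc KA33 2 _ _ _ _ _ _ chkA33, min_eq_right h']
  exact boxA33
lemma bigA12 (a b : ℕ) (h : 1 ≤ b) (h' : 1 ≤ a ∨ 2 ≤ b) : 2 ≤ HK KA12 (vL a b 0 0 0 0) := by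
  rw [HK_trunc KA12 3 _ _ _ _ _ _ chkA12]
  exact boxA12 _ (by omega) _ (by omega) (by omega) (by omega)

end MFProof

namespace MFProof

lemma slWt3 (μ : Fin 3 → ℕ) : slWt 3 μ 0 - slWt 3 μ 1 = μ 0 ∧ slWt 3 μ 1 - slWt 3 μ 2 = μ 1 ∧
    slWt 3 μ 2 - slWt 3 μ 3 = μ 2 := by
  simp [slWt, partLift, Finset.sum_filter, Fin.sum_univ_three]

lemma slWt_inj (μ μ' : Fin 3 → ℕ) (h : slWt 3 μ = slWt 3 μ') : μ = μ' := by
  obtain ⟨a, b, c⟩ := slWt3 μ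
  obtain ⟨a', b', c'⟩ := slWt3 μ'
  rw [h] at a b c
  have e0 : (μ 0 : ℚ) = μ' 0 := by rw [← a, ← a']
  have e1 : (μ 1 : ℚ) = μ' 1 := by rw [← b, ← b']
  have e2 : (μ 2 : ℚ) = μ' 2 := by rw [← c, ← c']
  ext i
  fin_cases i
  · exact_mod_cast e0
  · exact_mod_cast e1
  · exact_mod_cast e2

lemma slWt_mono (μ : Fin 3 → ℕ) : StrictMono (-(slWt 3 μ + rhoA 3)) := by
  obtain ⟨a, b, c⟩ := slWt3 μ
  have e0 : (0:ℚ) ≤ μ 0 := by positivity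
  have e1 : (0:ℚ) ≤ μ 1 := by positivity
  have e2 : (0:ℚ) ≤ μ 2 := by positivity
  rw [Fin.strictMono_iff_lt_succ]
  intro i
  fin_cases i <;> simp [rhoA] <;> linarith

lemma altA_pm (v p : Fin 4 → ℚ) (hv : Function.Injective v) : (altA 3 v).coeff p ≤ 1 := by
  rw [altA_coeff]
  by_cases h : ∃ σ : Equiv.Perm (Fin 4), (fun i => v (σ i)) = p
  · obtain ⟨σ, hσ⟩ := h
    rw [Finset.sum_eq_single σ]
    · rw [if_pos hσ, mul_one]
      rcases Int.units_eq_one_or (Equiv.Perm.sign σ) with h | h <;> simp [h]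
    · intro τ _ hτ
      rw [if_neg, mul_zero]
      intro h
      apply hτ
      ext i
      have := hv ((congrFun h i).trans (congrFun hσ i).symm)
      rw [this]
    · simp
  · rw [Finset.sum_eq_zero]
    · norm_num
    · intro σ _
      rw [if_neg, mul_zero]
      exact fun hh => h ⟨σ, hh⟩

lemma altA_ne (v p : Fin 4 → ℚ) (h : (altA 3 v).coeff p ≠ 0) : Set.range p = Set.range v := by
  rw [altA_coeff] at h
  obtain ⟨σ, -, hσ⟩ := Finset.exists_ne_zero_of_sum_ne_zero h
  have h1 : (fun i => v (σ i)) = p := by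
    by_contra hc; simp [hc] at hσ
  rw [← h1]
  exact σ.surjective.range_comp v

lemma mf_bound (F : CharRing 4) (c : (Fin 3 → ℕ) →₀ ℕ) (hF : Decomp 3 F c) (hc : ∀ μ, c μ ≤ 1) (p : Fin 4 → ℚ) :
    (F * altA 3 (rhoA 3)).coeff p ≤ 1 := by
  unfold Decomp at hF
  rw [hF, Finsupp.sum]
  simp only [AddMonoidAlgebra.coeff_sum, Finsupp.finsetSum_apply, AddMonoidAlgebra.coeff_smul, Finsupp.smul_apply,
    smul_eq_mul]
  have hv : ∀ μ, Function.Injective (slWt 3 μ + rhoA 3) := by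
    intro μ
    have := (slWt_mono μ).injective
    exact neg_injective.of_comp_iff _ |>.1 this
  by_cases h : ∃ μ, (altA 3 (slWt 3 μ + rhoA 3)).coeff p ≠ 0
  · obtain ⟨μ, hμ⟩ := h
    rw [Finset.sum_eq_single μ]
    · have h1 := altA_pm _ p (hv μ)
      have h2 := hc μ
      interval_cases h3 : c μ
      · simp
      · simpa using h1
    · intro ν _ hν
      by_contra h3
      apply hν
      have h4 := altA_ne _ _ hμ
      have h5 := altA_ne _ _ (right_ne_zero_of_mul h3)
      apply slWt_inj
      have h6 := (StrictMono.range_inj (slWt_mono ν) (slWt_mono μ)).1 (by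
        rw [h4] at h5
        show Set.range (fun i => -((slWt 3 ν + rhoA 3) i)) = Set.range (fun i => -((slWt 3 μ + rhoA 3) i))
        rw [Set.range_comp' Neg.neg, Set.range_comp' Neg.neg, h5])
      have := neg_injective h6
      exact add_right_cancel this
    · intro h; simp [Finsupp.notMem_support_iff.1 h]
  · push Not at h
    simp [h]

/-- the doubled shifted weight -/
def mY (lam : Fin 7 → ℕ) : Fin 7 → ℕ := fun i =>
  ![2 * (lam 0 + lam 1 + lam 2 + lam 3 + lam 4 + lam 5) + lam 6 + 13,
    2 * (lam 1 + lam 2 + lam 3 + lam 4 + lam 5) + lam 6 + 11,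
    2 * (lam 2 + lam 3 + lam 4 + lam 5) + lam 6 + 9,
    2 * (lam 3 + lam 4 + lam 5) + lam 6 + 7,
    2 * (lam 4 + lam 5) + lam 6 + 5,
    2 * (lam 5) + lam 6 + 3, lam 6 + 1] i

lemma rhoY_eq : rhoY .B 7 = fun i : Fin 7 => ((2 * (Fin.rev i : ℕ) + 1 : ℕ) : ℚ)/2 := by
  ext i
  fin_cases i <;> simp [rhoY] <;> norm_num

lemma mY_eq (lam : Fin 7 → ℕ) : epsWt .B 7 lam + rhoY .B 7 = fun i => (mY lam i : ℚ)/2 := by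
  ext i
  fin_cases i <;> simp [rhoY, epsWt, mY, cval, Finset.sum_filter, Fin.sum_univ_seven, show (⟨6, by norm_num⟩ : Fin 7) = 6 from rfl] <;> ring

lemma char_ex (lam : Fin 7 → ℕ) : ∃ f, IsCharY .B 7 lam f ∧ Dd 6 rho7 * mapR drop f = Dd 6 (fun i => (mY lam i : ℤ)) := by
  obtain ⟨f, h1, h2⟩ := exists_char 6 (mY lam) (by
    rcases Nat.mod_two_eq_zero_or_one (lam 6) with h | h
    · left; intro i; fin_cases i <;> simp [mY] <;> omega
    · right; intro i; fin_cases i <;> simp [mY] <;> omega)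
  refine ⟨f, ?_, h2⟩
  unfold IsCharY
  rw [mY_eq, rhoY_eq, h1]

/-- the weights attached to an integral matrix -/
def wOf (wm : Fin 4 → Fin 6 → ℤ) : Fin 7 → Fin 4 → ℚ := fun i =>
  Fin.lastCases (motive := fun _ => Fin 4 → ℚ) 0 (fun j t => (wm t j : ℚ)) i

def resH {n : ℕ} (w : Fin n → Fin 4 → ℚ) : (Fin n → ℚ) →+ (Fin 4 → ℚ) where
  toFun v := ∑ i, v i • w i
  map_zero' := by simp
  map_add' u v := by simp [add_smul, Finset.sum_add_distrib]

lemma resChar_eq {n : ℕ} (w : Fin n → Fin 4 → ℚ) (f : CharRing n) : resChar (r := 3) w f = mapR (resH w) f := rfl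

lemma ring_ext {k : ℕ} {R : Type*} [Ring R] (φ ψ : CharRing k →+* R) (h : ∀ v, φ (mono v) = ψ (mono v)) : φ = ψ := by
  refine RingHom.ext fun f => ?_
  induction f using AddMonoidAlgebra.induction_linear with
  | zero => simp
  | add f g hf hg => rw [map_add, map_add, hf, hg]
  | single v a =>
    have : AddMonoidAlgebra.single v a = a • mono v := by simp [mono]
    rw [this, map_zsmul, map_zsmul, h]

lemma res_eq (wm : Fin 4 → Fin 6 → ℤ) (f : CharRing 7) : resChar (r := 3) (wOf wm) f = mapR (resA wm) (mapR drop f) := by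
  rw [resChar_eq]
  have := ring_ext (mapR (resH (wOf wm))) ((mapR (resA wm)).comp (mapR drop)) (by
    intro v
    rw [RingHom.comp_apply, mapR_mono, mapR_mono, mapR_mono]
    congr 1
    ext t
    simp [Fin.sum_univ_castSucc (n := 6), wOf, resA, resH, drop]
    right; rfl)
  exact congrArg (fun g => g f) this

lemma not_mf (wm : Fin 4 → Fin 6 → ℤ) (hw : WtSys .B 7 3 (e 3 1 + e 3 3) (wOf wm)) (lam : Fin 7 → ℕ)
    (h : ∀ f, Dd 6 rho7 * f = Dd 6 (fun i => (mY lam i : ℤ)) → ∃ p, 2 ≤ (mapR (resA wm) f * altA 3 (rhoA 3)).coeff p) :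
    ¬ IsMFRes .B 7 3 (e 3 1 + e 3 3) lam := by
  intro H
  obtain ⟨f, hf, hf'⟩ := char_ex lam
  obtain ⟨c, hc, hc'⟩ := H _ hw f hf
  obtain ⟨p, hp⟩ := h _ hf'
  have := mf_bound _ c hc hc' p
  rw [res_eq] at this
  omega

lemma mY_anti (lam : Fin 7 → ℕ) : StrictAnti (fun i => (mY lam i : ℤ)) := by
  rw [Fin.strictAnti_iff_succ_lt]
  intro i
  fin_cases i <;> simp [mY] <;> omega

lemma mY_par (lam : Fin 7 → ℕ) (i j) : ((mY lam i : ℤ) - mY lam j) % 2 = 0 := by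
  have : ∀ i, (mY lam i : ℤ) % 2 = (lam 6 + 1) % 2 := by
    intro i; fin_cases i <;> simp [mY] <;> omega
  have h1 := this i
  have h2 := this j
  omega

lemma not_mf_cert {wm κ g φ L K} (H : CertOK wm κ g φ L K) (hw : WtSys .B 7 3 (e 3 1 + e 3 3) (wOf wm)) (lam : Fin 7 → ℕ)
    (h : 2 ≤ HK K (List.ofFn fun i => (mY lam i : ℤ))) : ¬ IsMFRes .B 7 3 (e 3 1 + e 3 3) lam := by
  apply not_mf wm hw
  intro f hf
  have h1 := cert H f _ (mY_anti lam).antitone (fun i => by positivity) (mY_par lam) hf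
  exact ⟨_, h.trans h1.ge⟩

lemma mY_vL (lam : Fin 7 → ℕ) (h : lam 6 = 0) : (List.ofFn fun i => (mY lam i : ℤ)) =
    vL (lam 0) (lam 1) (lam 2) (lam 3) (lam 4) (lam 5) := by
  rw [vL_eq]
  congr 1
  ext i
  fin_cases i <;> simp [mY, vF, h] <;> ring

lemma cert7 : CertOK wO1 ![0, 0, 0, 0] ![7, 5, 4, 0] ![2, 1, 1, 1, 1, 1] 0 [([0,0,0,0,0,0], 1)] := by
  constructor <;> decide +kernel

lemma HK_top (v : Fin 7 → ℤ) (hv : StrictAnti v) (h0 : ∀ i, 0 < v i) :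
    HK [([0,0,0,0,0,0], 1)] (List.ofFn v) = v (Fin.last 6) := by
  have h1 := DL_coeff v (fun _ => 0)
  have h2 := Dd_top v hv h0
  have h3 : (List.ofFn fun _ : Fin 6 => 0) = [0,0,0,0,0,0] := by simp [List.ofFn_succ]
  have h5 : shq (fun _ => 0) = 0 := shq_zero
  rw [h3] at h1
  have h6 : init6 v - shq (fun _ => 0) = init6 v := by rw [h5]; ext j; simp
  rw [h6] at h1
  have h1 := h1.trans h2
  unfold HK
  rw [List.map_singleton, List.sum_singleton, one_mul]
  exact h1

lemma mY_pos (lam : Fin 7 → ℕ) (i) : 0 < (mY lam i : ℤ) := by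
  fin_cases i <;> simp [mY] <;> omega

lemma big7 (lam : Fin 7 → ℕ) (h : 1 ≤ lam 6) : 2 ≤ HK [([0,0,0,0,0,0], 1)] (List.ofFn fun i => (mY lam i : ℤ)) := by
  rw [HK_top _ (mY_anti lam) (mY_pos lam)]
  have : mY lam (Fin.last 6) = lam 6 + 1 := by simp [mY]
  rw [this]; push_cast; omega

end MFProof

namespace MFProof

section generic
variable {n : ℕ} {R : Type} [CommRing R]

/-- generalised alternant of a list of exponents -/
def FF (g : ℤ → Fin n → R) (l : List ℤ) : R :=
  if l.length = n then (Matrix.of fun i j : Fin n => g (l.getD i 0) j).det else 0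

lemma FF_swap (g : ℤ → Fin n → R) (pre : List ℤ) (a b : ℤ) (t : List ℤ) :
    FF g (pre ++ a :: b :: t) = - FF g (pre ++ b :: a :: t) := by
  unfold FF
  have hl : (pre ++ a :: b :: t).length = (pre ++ b :: a :: t).length := by simp
  rw [hl]
  split_ifs with h
  · simp only [List.length_append, List.length_cons] at h
    let i₁ : Fin n := ⟨pre.length, by omega⟩
    let i₂ : Fin n := ⟨pre.length + 1, by omega⟩
    have hne : i₁ ≠ i₂ := by simp [i₁, i₂]
    have := Matrix.det_permute (Equiv.swap i₁ i₂) (Matrix.of fun i j : Fin n => g ((pre ++ b :: a :: t).getD i 0) j)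
    rw [Equiv.Perm.sign_swap hne] at this
    have h2 : (Matrix.of fun i j : Fin n => g ((pre ++ a :: b :: t).getD i 0) j) =
        (Matrix.of fun i j : Fin n => g ((pre ++ b :: a :: t).getD i 0) j).submatrix (Equiv.swap i₁ i₂) id := by
      ext i j
      simp only [Matrix.of_apply, Matrix.submatrix_apply, id]
      congr 1
      by_cases h1 : i = i₁
      · rw [h1, Equiv.swap_apply_left]
        simp [i₁, i₂]
      by_cases h2 : i = i₂
      · rw [h2, Equiv.swap_apply_right]
        simp [i₁, i₂]
      rw [Equiv.swap_apply_of_ne_of_ne h1 h2]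
      have h1' : (i:ℕ) ≠ pre.length := fun h => h1 (Fin.ext h)
      have h2' : (i:ℕ) ≠ pre.length + 1 := fun h => h2 (Fin.ext h)
      rcases lt_or_ge (i:ℕ) pre.length with h3 | h3
      · rw [List.getD_append _ _ _ _ h3, List.getD_append _ _ _ _ h3]
      · rw [List.getD_append_right _ _ _ _ h3, List.getD_append_right _ _ _ _ h3]
        obtain ⟨d, hd⟩ : ∃ d, (i:ℕ) - pre.length = d + 2 := ⟨(i:ℕ) - pre.length - 2, by omega⟩
        rw [hd]; simp
    rw [h2, this]; simp
  · simp

lemma FF_eq (g : ℤ → Fin n → R) (pre : List ℤ) (a : ℤ) (t : List ℤ) :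
    FF g (pre ++ a :: a :: t) = 0 := by
  unfold FF
  split_ifs with h
  · simp only [List.length_append, List.length_cons] at h
    apply Matrix.det_zero_of_row_eq (i := ⟨pre.length, by omega⟩) (j := ⟨pre.length + 1, by omega⟩)
    · simp
    · ext j
      simp 
  · rfl

lemma FF_smul (g : ℤ → Fin n → R) (pre : List ℤ) (a b z : ℤ) (t : List ℤ) (hab : ∀ j, g a j = z * g b j) :
    FF g (pre ++ a :: t) = z * FF g (pre ++ b :: t) := by
  unfold FF
  have hl : (pre ++ a :: t).length = (pre ++ b :: t).length := by simp
  rw [hl]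
  split_ifs with h
  · simp only [List.length_append, List.length_cons] at h
    let i₁ : Fin n := ⟨pre.length, by omega⟩
    have h2 : (Matrix.of fun i j : Fin n => g ((pre ++ a :: t).getD i 0) j) =
       (Matrix.of fun i j : Fin n => g ((pre ++ b :: t).getD i 0) j).updateRow i₁ ((z : R) • fun j => g b j) := by
      ext i j
      by_cases h1 : i = i₁
      · rw [h1, Matrix.updateRow_self]
        simp [i₁, hab]
      rw [Matrix.updateRow_ne h1]
      have h1' : (i:ℕ) ≠ pre.length := fun h => h1 (Fin.ext h)
      simp only [Matrix.of_apply]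
      congr 1
      rcases lt_or_ge (i:ℕ) pre.length with h3 | h3
      · rw [List.getD_append _ _ _ _ h3, List.getD_append _ _ _ _ h3]
      · rw [List.getD_append_right _ _ _ _ h3, List.getD_append_right _ _ _ _ h3]
        obtain ⟨d, hd⟩ : ∃ d, (i:ℕ) - pre.length = d + 1 := ⟨(i:ℕ) - pre.length - 1, by omega⟩
        rw [hd]; simp
    rw [h2, Matrix.det_updateRow_smul]
    congr 2
    ext i j
    by_cases h1 : i = i₁
    · rw [h1, Matrix.updateRow_self]
      simp [i₁]
    · rw [Matrix.updateRow_ne h1]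
  · simp

lemma det_mul_sum (M : Matrix (Fin n) (Fin n) R) (h : Fin n → R) :
    M.det * ∑ j, h j = ∑ r, (M.updateRow r (fun j => M r j * h j)).det := by
  simp only [Matrix.det_apply]
  rw [Finset.sum_comm, Finset.sum_mul]
  refine Finset.sum_congr rfl fun σ _ => ?_
  rw [← Finset.smul_sum, smul_mul_assoc,
    ← Equiv.sum_comp σ (fun r => ∏ i, M.updateRow r (fun j => M r j * h j) (σ i) i)]
  congr 1
  rw [Finset.mul_sum]
  refine Finset.sum_congr rfl fun k _ => ?_
  rw [← Finset.mul_prod_erase _ _ (Finset.mem_univ k), ← Finset.mul_prod_erase _ _ (Finset.mem_univ k),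
    Matrix.updateRow_self]
  have : ∀ x ∈ Finset.univ.erase k, M.updateRow (σ k) (fun j => M (σ k) j * h j) (σ x) x = M (σ x) x := by
    intro x hx
    rw [Matrix.updateRow_ne (fun hh => (Finset.ne_of_mem_erase hx) (σ.injective hh))]
  rw [Finset.prod_congr rfl this]; ring

lemma FF_mul (g : ℤ → Fin n → R) (h : Fin n → R) (ds : List ℤ)
    (hd : ∀ a j, g a j * h j = (ds.map fun d => g (a + d) j).sum) (l : List ℤ) :
    FF g l * ∑ j, h j = ((List.range n).map fun i => (ds.map fun d => FF g (l.modify i (· + d))).sum).sum := by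
  by_cases hl : l.length = n
  · have e1 : FF g l = (Matrix.of fun i j : Fin n => g (l.getD i 0) j).det := by simp [FF, hl]
    rw [e1, det_mul_sum]
    have : ∀ r : Fin n, (Matrix.updateRow (Matrix.of fun i j : Fin n => g (l.getD i 0) j) r
       (fun j => (Matrix.of fun i j : Fin n => g (l.getD i 0) j) r j * h j)).det =
        (ds.map fun d => FF g (l.modify r (· + d))).sum := by
      intro r
      simp only [Matrix.of_apply, hd]
      clear hd
      induction ds with
      | nil =>
        simp only [List.map_nil, List.sum_nil]
        exact Matrix.det_eq_zero_of_row_eq_zero r (fun j => by simp)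
      | cons d ds ih =>
        simp only [List.map_cons, List.sum_cons]
        have := Matrix.det_updateRow_add (Matrix.of fun i j : Fin n => g (l.getD i 0) j) r
          (fun j => g (l.getD r 0 + d) j) (fun j => (ds.map fun d => g (l.getD r 0 + d) j).sum)
        simp only [Pi.add_def] at this
        rw [this, ih]
        congr 1
        unfold FF
        rw [if_pos (by simpa using hl)]
        congr 1
        ext i j
        have hr : (r:ℕ) < l.length := by rw [hl]; exact r.2
        have hi : (i:ℕ) < l.length := by rw [hl]; exact i.2
        by_cases hri : i = r
        · subst hri
          rw [Matrix.updateRow_self]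
          simp [List.getD_eq_getElem?_getD, hr]
        · rw [Matrix.updateRow_ne hri]
          have : (r:ℕ) ≠ i := fun h => hri (Fin.ext h.symm)
          simp [List.getD_eq_getElem?_getD, List.getElem?_modify, this]
    rw [Finset.sum_congr rfl fun r _ => this r,
      Fin.sum_univ_eq_sum_range (fun i => (ds.map fun d => FF g (l.modify i (· + d))).sum) n]
    rfl
  · have : ∀ i d, FF g (l.modify i (· + d)) = 0 := by
      intro i d; unfold FF; rw [if_neg]; simpa using hl
    simp [FF, hl]

end generic

end MFProof

namespace MFProof

def insS (x : ℤ) : List ℤ → ℤ × List ℤ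
  | [] => (1, [x])
  | y :: t => if y < x then (1, x :: y :: t) else if x = y then (0, x :: y :: t) else
      (-(insS x t).1, y :: (insS x t).2)

def sortS (nm : ℤ → ℤ × ℤ) : List ℤ → ℤ × List ℤ
  | [] => (1, [])
  | x :: t => ((nm x).1 * ((sortS nm t).1 * (insS (nm x).2 (sortS nm t).2).1), (insS (nm x).2 (sortS nm t).2).2)

def addT (c : ℤ) (l : List ℤ) : List (ℤ × List ℤ) → List (ℤ × List ℤ)
  | [] => [(c, l)]
  | x :: t => if x.2 = l then (if x.1 + c = 0 then t else (x.1 + c, l) :: t) else x :: addT c l t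

def nrm (nm : ℤ → ℤ × ℤ) : List (ℤ × List ℤ) → List (ℤ × List ℤ)
  | [] => []
  | x :: t => if x.1 * (sortS nm x.2).1 = 0 then nrm nm t else
      addT (x.1 * (sortS nm x.2).1) (sortS nm x.2).2 (nrm nm t)

def sc (z : ℤ) (C : List (ℤ × List ℤ)) : List (ℤ × List ℤ) := C.map fun x => (z * x.1, x.2)

def opD (n : ℕ) (nm : ℤ → ℤ × ℤ) (ds : List ℤ) (C : List (ℤ × List ℤ)) : List (ℤ × List ℤ) :=
  nrm nm (C.flatMap fun x => (List.range n).flatMap fun i => ds.map fun d => (x.1, x.2.modify i (· + d)))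

section generic
variable {n : ℕ} {R : Type} [CommRing R]

def ev (g : ℤ → Fin n → R) (C : List (ℤ × List ℤ)) : R := (C.map fun x => (x.1 : R) * FF g x.2).sum

lemma ev_cons (g : ℤ → Fin n → R) (x) (C : List (ℤ × List ℤ)) : ev g (x :: C) = x.1 * FF g x.2 + ev g C := by
  simp [ev]

lemma ev_nil (g : ℤ → Fin n → R) : ev g [] = 0 := by simp [ev]

lemma ev_append (g : ℤ → Fin n → R) (C D) : ev g (C ++ D) = ev g C + ev g D := by simp [ev]

lemma ev_sc (g : ℤ → Fin n → R) (z C) : ev g (sc z C) = z * ev g C := by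
  induction C with
  | nil => simp [ev, sc]
  | cons x t ih =>
    have : sc z (x :: t) = (z * x.1, x.2) :: sc z t := rfl
    rw [this, ev_cons, ev_cons, ih]; push_cast; ring

lemma insS_spec (g : ℤ → Fin n → R) (x : ℤ) (l pre : List ℤ) :
    FF g (pre ++ x :: l) = (insS x l).1 * FF g (pre ++ (insS x l).2) := by
  induction l generalizing pre with
  | nil => simp [insS]
  | cons y t ih =>
    unfold insS
    split_ifs with h1 h2
    · simp
    · subst h2; simp [FF_eq]
    · rw [FF_swap]
      have := ih (pre ++ [y])
      simp only [List.append_assoc, List.singleton_append] at this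
      rw [this]; push_cast; ring

lemma sortS_spec (g : ℤ → Fin n → R) (nm : ℤ → ℤ × ℤ) (hnm : ∀ a j, g a j = (nm a).1 * g (nm a).2 j) (l pre : List ℤ) :
    FF g (pre ++ l) = (sortS nm l).1 * FF g (pre ++ (sortS nm l).2) := by
  induction l generalizing pre with
  | nil => simp [sortS]
  | cons x t ih =>
    unfold sortS
    rw [FF_smul g pre x (nm x).2 (nm x).1 t (hnm x)]
    have := ih (pre ++ [(nm x).2])
    simp only [List.append_assoc, List.singleton_append] at this
    rw [this, insS_spec]; push_cast; ring

lemma addT_spec (g : ℤ → Fin n → R) (c l C) : ev g (addT c l C) = c * FF g l + ev g C := by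
  induction C with
  | nil => simp [addT, ev]
  | cons x t ih =>
    unfold addT
    split_ifs with h1 h2
    · rw [ev_cons, h1, ← add_assoc, ← add_mul]
      have : (c : R) + x.1 = 0 := by rw [add_comm]; exact_mod_cast congrArg (Int.cast : ℤ → R) h2
      rw [this]; ring
    · rw [ev_cons, ev_cons, h1]; push_cast; ring
    · rw [ev_cons, ev_cons, ih]; ring

lemma nrm_spec (g : ℤ → Fin n → R) (nm : ℤ → ℤ × ℤ) (hnm : ∀ a j, g a j = (nm a).1 * g (nm a).2 j) (C) :
    ev g (nrm nm C) = ev g C := by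
  induction C with
  | nil => simp [nrm]
  | cons x t ih =>
    have h := sortS_spec g nm hnm x.2 []
    simp only [List.nil_append] at h
    unfold nrm
    split_ifs with h1
    · have h2 : (x.1 : R) * (sortS nm x.2).1 = 0 := by exact_mod_cast congrArg (Int.cast : ℤ → R) h1
      rw [ev_cons, ih, h, ← mul_assoc, h2]; ring
    · rw [addT_spec, ev_cons, ih, h]; push_cast; ring

lemma opD_spec (g : ℤ → Fin n → R) (nm : ℤ → ℤ × ℤ) (hnm : ∀ a j, g a j = (nm a).1 * g (nm a).2 j)
    (h : Fin n → R) (ds : List ℤ)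
    (hd : ∀ a j, g a j * h j = (ds.map fun d => g (a + d) j).sum) (C) :
    ev g (opD n nm ds C) = ev g C * ∑ j, h j := by
  unfold opD
  rw [nrm_spec g nm hnm]
  induction C with
  | nil => simp [ev]
  | cons x t ih =>
    rw [List.flatMap_cons, ev_append, ih, ev_cons, add_mul, mul_assoc, FF_mul g h ds hd]
    congr 1
    generalize List.range n = rr
    induction rr with
    | nil => simp [ev]
    | cons i rr ihr =>
      rw [List.flatMap_cons, ev_append, ihr, List.map_cons, List.sum_cons, mul_add]
      congr 1
      clear hd ih ihr
      induction ds with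
      | nil => simp [ev]
      | cons d ds ihd => rw [List.map_cons, ev_cons, ihd, List.map_cons, List.sum_cons]; ring

end generic

/-! type A -/
def gA (a : ℤ) (j : Fin 4) : CharRing 4 := X j a
def nmA (x : ℤ) : ℤ × ℤ := (1, x)
def pA (k : ℤ) : CharRing 4 := ∑ j, X j (k:ℚ)
def nA (k : ℤ) : CharRing 4 := pA k * pA (-k) - 1
def opA (k : ℤ) (C : List (ℤ × List ℤ)) : List (ℤ × List ℤ) :=
  nrm nmA (sc (-1) C ++ opD 4 nmA [-k] (opD 4 nmA [k] C))

lemma opA_spec (k : ℤ) (C) : ev gA (opA k C) = ev gA C * nA k := by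
  have h0 : ∀ a j, gA a j = (nmA a).1 * gA (nmA a).2 j := by intro a j; simp [nmA]
  have h1 : ∀ (k a : ℤ) j, gA a j * X j (k:ℚ) = ([k].map fun d => gA (a + d) j).sum := by
    intro k a j
    simp only [List.map_singleton, List.sum_singleton, gA, X_mul, Int.cast_add]
  unfold opA
  rw [nrm_spec gA nmA h0, ev_append, ev_sc, opD_spec gA nmA h0 (fun j => X j ((-k : ℤ) : ℚ)) _ (h1 _),
    opD_spec gA nmA h0 (fun j => X j (k:ℚ)) _ (h1 _)]
  unfold nA pA
  push_cast; ring

/-! type B -/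
def gB (a : ℤ) (j : Fin 7) : CharRing 7 := X j ((a:ℚ)/2) - X j (-((a:ℚ)/2))
def nmB (x : ℤ) : ℤ × ℤ := if 0 < x then (1, x) else if x = 0 then (0, 0) else (-1, -x)
def mB (k : ℤ) : CharRing 7 := (∑ j, (X j (k:ℚ) + X j (-(k:ℚ)))) + 1
def opB (k : ℤ) (C : List (ℤ × List ℤ)) : List (ℤ × List ℤ) :=
  nrm nmB (C ++ opD 7 nmB [2*k, -(2*k)] C)

lemma opB_spec (k : ℤ) (C) : ev gB (opB k C) = ev gB C * mB k := by
  have h0 : ∀ a j, gB a j = (nmB a).1 * gB (nmB a).2 j := by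
    intro a j; unfold nmB; split_ifs with h1 h2
    · simp
    · simp [gB, h2]
    · simp [gB, neg_div]
  have h1 : ∀ (a : ℤ) j, gB a j * (X j (k:ℚ) + X j (-(k:ℚ))) = ([2*k, -(2*k)].map fun d => gB (a + d) j).sum := by
    intro a j
    simp only [List.map_cons, List.map_nil, List.sum_cons, List.sum_nil, gB, sub_mul, mul_add, X_mul]
    push_cast
    have e1 : ((a:ℚ) + 2 * k) / 2 = a / 2 + k := by ring
    have e2 : ((a:ℚ) + -(2 * k)) / 2 = a / 2 + -k := by ring
    rw [e1, e2, neg_add, neg_add, neg_neg]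
    ring
  unfold opB
  rw [nrm_spec gB nmB h0, ev_append, opD_spec gB nmB h0 (fun j => X j (k:ℚ) + X j (-(k:ℚ))) _ h1]
  unfold mB
  ring

lemma altA_FF (l : List ℤ) (hl : l.length = 4) : FF gA l = altA 3 (fun i => (l.getD i 0 : ℚ)) := by
  unfold FF
  rw [if_pos hl, Matrix.det_apply]
  unfold altA
  refine Finset.sum_congr rfl fun σ _ => ?_
  simp only [Matrix.of_apply, gA]
  rw [prod_X (fun i => (l.getD (σ i) 0 : ℚ))]
  rfl

lemma altY_FF (l : List ℤ) (hl : l.length = 7) : FF gB l = altY .B 7 (fun i => (l.getD i 0 : ℚ)/2) := by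
  unfold FF
  rw [if_pos hl, altY_det]
  rfl

def rA : List (ℤ × List ℤ) := [(1, [3,2,1,0])]
def rB : List (ℤ × List ℤ) := [(1, [13,11,9,7,5,3,1])]

def P2 (op : ℤ → List (ℤ × List ℤ) → List (ℤ × List ℤ)) (r : List (ℤ × List ℤ)) := op 1 (op 1 r) ++ sc (-1) (op 2 r)
def P11 (op : ℤ → List (ℤ × List ℤ) → List (ℤ × List ℤ)) (r : List (ℤ × List ℤ)) :=
  op 1 (op 1 r) ++ op 2 r ++ sc (-2) r
def P3 (op : ℤ → List (ℤ × List ℤ) → List (ℤ × List ℤ)) (r : List (ℤ × List ℤ)) :=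
  op 1 (op 1 (op 1 r)) ++ sc (-3) (op 1 (op 2 r)) ++ sc 2 (op 3 r)
def P111 (op : ℤ → List (ℤ × List ℤ) → List (ℤ × List ℤ)) (r : List (ℤ × List ℤ)) :=
  op 1 (op 1 (op 1 r)) ++ sc 3 (op 1 (op 2 r)) ++ sc 2 (op 3 r) ++ sc (-6) (op 1 r)
def P1111 (op : ℤ → List (ℤ × List ℤ) → List (ℤ × List ℤ)) (r : List (ℤ × List ℤ)) :=
  op 1 (op 1 (op 1 (op 1 r))) ++ sc 6 (op 1 (op 1 (op 2 r))) ++ sc 3 (op 2 (op 2 r)) ++ sc 8 (op 1 (op 3 r)) ++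
    sc 6 (op 4 r) ++ sc (-12) (op 1 (op 1 r)) ++ sc (-12) (op 2 r)

lemma B2 : nrm nmB (P2 opB rB) = [(2, [15,13,9,7,5,3,1])] := by decide +kernel
lemma B11 : nrm nmB (P11 opB rB) = [(2, [17,11,9,7,5,3,1])] := by decide +kernel
lemma B3 : nrm nmB (P3 opB rB) = [(6, [15,13,11,7,5,3,1])] := by decide +kernel
lemma B111 : nrm nmB (P111 opB rB) = [(6, [19,11,9,7,5,3,1])] := by decide +kernel
lemma B1111 : nrm nmB (P1111 opB rB) = [(24, [21,11,9,7,5,3,1])] := by decide +kernel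
lemma A1 : opA 1 rA = [(1, [4,2,1,-1])] := by decide +kernel

end MFProof

namespace MFProof

lemma evA_r : ev gA rA = altA 3 (rhoA 3) := by
  rw [rA, ev_cons, ev_nil, altA_FF _ rfl, add_zero, Int.cast_one, one_mul]
  congr 1
  ext i
  fin_cases i <;> simp [rhoA] <;> norm_num

lemma evB_r : ev gB rB = altY .B 7 (rhoY .B 7) := by
  rw [rB, ev_cons, ev_nil, altY_FF _ rfl, add_zero, Int.cast_one, one_mul]
  congr 1
  ext i
  fin_cases i <;> simp [rhoY] <;> norm_num

lemma altA_rho_ne : altA 3 (rhoA 3) ≠ 0 := by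
  intro h
  have h1 := altA_coeff 3 (rhoA 3) (rhoA 3)
  rw [h, Finset.sum_eq_single 1] at h1
  · simp at h1
  · intro σ _ hσ
    rw [if_neg, mul_zero]
    intro hh
    apply hσ
    ext i
    have := congrFun hh i
    simp only [rhoA] at this
    have h2 : (((σ i : Fin 4) : ℕ) : ℚ) = ((i : ℕ) : ℚ) := by linarith
    simpa using (by exact_mod_cast h2 : ((σ i : Fin 4) : ℕ) = i)
  · simp

lemma altY_ne {n : ℕ} (v : Fin n → ℚ) (hp : ∀ i, 0 < v i) (hinj : ∀ i j, v i = v j → i = j) : altY .B n v ≠ 0 := by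
  intro h
  have h1 : (altY .B n (v)).coeff (v) = 1 := by
    rw [altY_det, Matrix.det_apply]
    simp only [AddMonoidAlgebra.coeff_sum, Finsupp.finsetSum_apply, Matrix.of_apply]
    rw [Finset.sum_eq_single 1]
    · rw [Equiv.Perm.sign_one, one_smul]
      have := coeff_prod_sub_X (v) (v)
      simp only [Equiv.Perm.one_apply]
      rw [this]
      apply Finset.prod_eq_one
      intro j _
      rw [if_pos rfl, if_neg, sub_zero]
      have := hp j
      intro hh; linarith
    · intro σ _ hσ
      have h3 : (∏ j, (X j (v (σ j)) - X j (-(v (σ j))))).coeff (v) = 0 := by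
        rw [coeff_prod_sub_X (fun j => v (σ j))]
        by_contra hc
        apply hσ
        ext j
        have h2 := Finset.prod_ne_zero_iff.1 hc j (Finset.mem_univ j)
        have h4 : v (σ j) = v j := by
          by_contra h5
          apply h2
          rw [if_neg h5, if_neg, sub_zero]
          have := hp j
          have := hp (σ j)
          intro hh; linarith
        rw [hinj _ _ h4]; rfl
      rcases Int.units_eq_one_or (Equiv.Perm.sign σ) with h5 | h5
      · rw [h5, one_smul]; exact h3
      · rw [h5, Units.neg_smul, one_smul, AddMonoidAlgebra.coeff_neg, Finsupp.neg_apply, h3, neg_zero]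
    · simp
  rw [h] at h1
  simp at h1

lemma altY_rho_ne : altY .B 7 (rhoY .B 7) ≠ 0 := by
  apply altY_ne
  · intro i
    fin_cases i <;> simp [rhoY] <;> norm_num
  · intro i j hij
    simp only [rhoY] at hij
    have h2 : ((i : ℕ) : ℚ) = ((j : ℕ) : ℚ) := by linarith
    exact Fin.ext (by exact_mod_cast h2)

lemma nA_rho : nA 1 * altA 3 (rhoA 3) = altA 3 (slWt 3 (e 3 1 + e 3 3) + rhoA 3) := by
  rw [mul_comm, ← evA_r, ← opA_spec, A1, ev_cons, ev_nil, altA_FF _ rfl, add_zero, Int.cast_one, one_mul]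
  congr 1
  ext i
  fin_cases i <;> simp [rhoA, slWt, partLift, e, Finset.sum_filter, Fin.sum_univ_three] <;> norm_num

lemma WtSys_iff (w : Fin 7 → Fin 4 → ℚ) : WtSys .B 7 3 (e 3 1 + e 3 3) w ↔
    (∑ i, (mono (w i) + mono (-(w i)))) + 1 = nA 1 := by
  unfold WtSys
  rw [if_pos rfl, ← nA_rho, mono_zero]
  constructor
  · exact fun h => mul_right_cancel₀ altA_rho_ne h
  · intro h; rw [h]

def scal (k : ℤ) : (Fin 4 → ℚ) →+ (Fin 4 → ℚ) where
  toFun v := (k:ℚ) • v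
  map_zero' := by simp
  map_add' u v := by simp

lemma scal_nA (k : ℤ) : mapR (scal k) (nA 1) = nA k := by
  have h : ∀ z : ℤ, mapR (scal k) (pA z) = pA (k * z) := by
    intro z
    unfold pA
    rw [map_sum]
    refine Finset.sum_congr rfl fun j _ => ?_
    rw [X, mapR_mono, X]
    congr 1
    ext i
    simp [scal, Pi.single_apply]
  unfold nA
  rw [map_sub, map_mul, h, h, map_one]
  simp

lemma res_mB (w : Fin 7 → Fin 4 → ℚ) (hw : WtSys .B 7 3 (e 3 1 + e 3 3) w) (k : ℤ) :
    mapR (resH w) (mB k) = nA k := by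
  rw [WtSys_iff] at hw
  rw [← scal_nA, ← hw]
  unfold mB
  simp only [map_add, map_sum, map_one, X, mapR_mono]
  congr 1
  refine Finset.sum_congr rfl fun j _ => ?_
  congr 2
  · simp [resH, scal, Pi.single_apply]
  · simp [resH, scal, Pi.single_apply]

def toMu (l : List ℤ) : Fin 3 → ℕ := fun i => (l.getD i 0 - l.getD (i+1) 0 - 1).toNat

lemma toMu_spec (a b c d : ℤ) (h1 : b < a) (h2 : c < b) (h3 : d < c) (h : a + b + c + d = 6) :
    altA 3 (slWt 3 (toMu [a,b,c,d]) + rhoA 3) = FF gA [a,b,c,d] := by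
  rw [altA_FF _ rfl]
  congr 1
  have e0 : ((toMu [a,b,c,d] 0 : ℕ) : ℤ) = a - b - 1 := by simp [toMu]; omega
  have e1 : ((toMu [a,b,c,d] 1 : ℕ) : ℤ) = b - c - 1 := by simp [toMu]; omega
  have e2 : ((toMu [a,b,c,d] 2 : ℕ) : ℤ) = c - d - 1 := by simp [toMu]; omega
  have q0 : ((toMu [a,b,c,d] 0 : ℕ) : ℚ) = a - b - 1 := by exact_mod_cast e0
  have q1 : ((toMu [a,b,c,d] 1 : ℕ) : ℚ) = b - c - 1 := by exact_mod_cast e1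
  have q2 : ((toMu [a,b,c,d] 2 : ℕ) : ℚ) = c - d - 1 := by exact_mod_cast e2
  have q : (a:ℚ) + b + c + d = 6 := by exact_mod_cast h
  ext i
  fin_cases i <;> simp [rhoA, slWt, partLift, Finset.sum_filter, Fin.sum_univ_three, q0, q1, q2] <;> linarith

def okL (l : List ℤ) : Bool := match l with
  | [a,b,c,d] => decide (b < a) && decide (c < b) && decide (d < c) && decide (a + b + c + d = 6)
  | _ => false

lemma okL_spec (l : List ℤ) (h : okL l = true) : altA 3 (slWt 3 (toMu l) + rhoA 3) = FF gA l := by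
  unfold okL at h
  split at h
  · simp only [Bool.and_eq_true, decide_eq_true_eq] at h
    exact toMu_spec _ _ _ _ h.1.1.1 h.1.1.2 h.1.2 h.2
  · simp at h

lemma ev_map (z : ℤ) (Ls : List (List ℤ)) : ev gA (Ls.map fun l => (z, l)) = z * (Ls.map (FF gA)).sum := by
  induction Ls with
  | nil => simp [ev]
  | cons l t ih => rw [List.map_cons, ev_cons, ih, List.map_cons, List.sum_cons]; ring

lemma intCast_cancel {k : ℕ} (z : ℤ) (hz : z ≠ 0) {a b : CharRing k} (h : (z : CharRing k) * a = z * b) : a = b := by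
  rw [← zsmul_eq_mul, ← zsmul_eq_mul] at h
  ext v
  have := congrArg (fun f => f.coeff v) h
  simp only [AddMonoidAlgebra.coeff_smul, Finsupp.smul_apply, smul_eq_mul] at this
  exact mul_left_cancel₀ hz this

lemma mf_of (lam : Fin 7 → ℕ) (z : ℤ) (hz : z ≠ 0) (lB : List ℤ) (hlB : lB.length = 7)
    (hlam : (fun i => (mY lam i : ℤ)) = fun i : Fin 7 => lB.getD i 0)
    (q : CharRing 7) (qA : CharRing 4)
    (hq : ev gB rB * q = ev gB [(z, lB)])
    (hqA : ∀ w : Fin 7 → Fin 4 → ℚ, WtSys .B 7 3 (e 3 1 + e 3 3) w → mapR (resH w) q = qA)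
    (Ls : List (List ℤ)) (hA : ev gA rA * qA = ev gA (Ls.map fun l => (z, l))) (hLs : ∀ l ∈ Ls, okL l = true)
    (hnd : (Ls.map toMu).Nodup) : IsMFRes .B 7 3 (e 3 1 + e 3 3) lam := by
  classical
  intro w hw f hf
  have h1 : (z : CharRing 7) * f = q := by
    apply mul_left_cancel₀ altY_rho_ne
    rw [← evB_r, hq, ev_cons, ev_nil, add_zero, altY_FF _ hlB, evB_r, mul_left_comm]
    unfold IsCharY at hf
    rw [hf, mY_eq]
    congr 2
    ext i
    have := congrFun hlam i
    rw [← this, Int.cast_natCast]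
  have h2 : mapR (resH w) f * altA 3 (rhoA 3) = (Ls.map (FF gA)).sum := by
    apply intCast_cancel z hz
    rw [← ev_map, ← hA, ← hqA w hw, ← h1, map_mul, map_intCast, evA_r]; ring
  let S := (Ls.map toMu).toFinset
  refine ⟨Finsupp.onFinset S (fun μ => if μ ∈ S then 1 else 0) (by intro a ha; by_contra hc; simp [hc] at ha), ?_, ?_⟩
  · unfold Decomp
    rw [resChar_eq, h2, Finsupp.onFinset_sum _ (by intro a; simp)]
    have : ∀ μ ∈ S, (((if μ ∈ S then 1 else 0 : ℕ)) : ℤ) • altA 3 (slWt 3 μ + rhoA 3) = altA 3 (slWt 3 μ + rhoA 3) := by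
      intro μ hμ; rw [if_pos hμ]; simp
    rw [Finset.sum_congr rfl this, List.sum_toFinset _ hnd, List.map_map]
    congr 1
    apply List.map_congr_left
    intro l hl
    exact (okL_spec l (hLs l hl)).symm
  · intro μ
    simp only [Finsupp.onFinset_apply]
    split_ifs <;> simp

end MFProof

namespace MFProof

section polys
variable {n : ℕ} {R : Type} [CommRing R]

def Q2 (m : ℤ → R) : R := m 1 ^ 2 - m 2
def Q11 (m : ℤ → R) : R := m 1 ^ 2 + m 2 - 2
def Q3 (m : ℤ → R) : R := m 1 ^ 3 - 3 * (m 1 * m 2) + 2 * m 3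
def Q111 (m : ℤ → R) : R := m 1 ^ 3 + 3 * (m 1 * m 2) + 2 * m 3 - 6 * m 1
def Q1111 (m : ℤ → R) : R := m 1 ^ 4 + 6 * (m 1 ^ 2 * m 2) + 3 * m 2 ^ 2 + 8 * (m 1 * m 3) + 6 * m 4
  - 12 * m 1 ^ 2 - 12 * m 2

lemma Q_spec (g : ℤ → Fin n → R) (op : ℤ → List (ℤ × List ℤ) → List (ℤ × List ℤ)) (m : ℤ → R)
    (h : ∀ k C, ev g (op k C) = ev g C * m k) (r) :
    ev g (P2 op r) = ev g r * Q2 m ∧ ev g (P11 op r) = ev g r * Q11 m ∧ ev g (P3 op r) = ev g r * Q3 m ∧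
    ev g (P111 op r) = ev g r * Q111 m ∧ ev g (P1111 op r) = ev g r * Q1111 m := by
  refine ⟨?_, ?_, ?_, ?_, ?_⟩ <;>
  · simp only [P2, P11, P3, P111, P1111, ev_append, ev_sc, h, Q2, Q11, Q3, Q111, Q1111]
    push_cast
    ring

lemma Q_map {S : Type} [CommRing S] (φ : R →+* S) (m : ℤ → R) (m' : ℤ → S) (h : ∀ k, φ (m k) = m' k) :
    φ (Q2 m) = Q2 m' ∧ φ (Q11 m) = Q11 m' ∧ φ (Q3 m) = Q3 m' ∧ φ (Q111 m) = Q111 m' ∧ φ (Q1111 m) = Q1111 m' := by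
  have h2 : φ 2 = 2 := map_ofNat φ 2
  have h3 : φ 3 = 3 := map_ofNat φ 3
  have h6 : φ 6 = 6 := map_ofNat φ 6
  have h8 : φ 8 = 8 := map_ofNat φ 8
  have h12 : φ 12 = 12 := map_ofNat φ 12
  simp [Q2, Q11, Q3, Q111, Q1111, h, h2, h3, h6, h8, h12]

end polys

lemma hnA : ∀ a j, gA a j = (nmA a).1 * gA (nmA a).2 j := by intro a j; simp [nmA]
lemma hnB : ∀ a j, gB a j = (nmB a).1 * gB (nmB a).2 j := by
  intro a j; unfold nmB; split_ifs with h1 h2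
  · simp
  · simp [gB, h2]
  · simp [gB, neg_div]

lemma QB : ev gB (P2 opB rB) = ev gB rB * Q2 mB ∧ ev gB (P11 opB rB) = ev gB rB * Q11 mB ∧ ev gB (P3 opB rB) = ev gB rB * Q3 mB ∧ ev gB (P111 opB rB) = ev gB rB * Q111 mB ∧ ev gB (P1111 opB rB) = ev gB rB * Q1111 mB := Q_spec gB opB mB opB_spec rB
lemma QA : ev gA (P2 opA rA) = ev gA rA * Q2 nA ∧ ev gA (P11 opA rA) = ev gA rA * Q11 nA ∧ ev gA (P3 opA rA) = ev gA rA * Q3 nA ∧ ev gA (P111 opA rA) = ev gA rA * Q111 nA ∧ ev gA (P1111 opA rA) = ev gA rA * Q1111 nA := Q_spec gA opA nA opA_spec rA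

def L2 : List (List ℤ) := [[5, 2, 0, -1], [4, 3, 1, -2], [4, 2, 1, -1]]
def L11 : List (List ℤ) := [[5, 2, 1, -2], [4, 3, 0, -1], [4, 2, 1, -1]]
def L3 : List (List ℤ) := [[6, 1, 0, -1], [3, 2, 1, 0], [5, 3, 0, -2], [4, 3, 2, -3], [4, 3, 0, -1], [4, 2, 1, -1],
  [4, 3, 1, -2], [5, 2, 0, -1], [5, 2, 1, -2]]
def L111 : List (List ℤ) := [[4, 2, 1, -1], [6, 2, 1, -3], [3, 2, 1, 0], [5, 3, 0, -2], [4, 3, 1, -2], [5, 2, 0, -1],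
  [5, 2, 1, -2]]

lemma A2e : nrm nmA (P2 opA rA) = L2.map fun l => (2, l) := by decide +kernel
lemma A11e : nrm nmA (P11 opA rA) = L11.map fun l => (2, l) := by decide +kernel
lemma A3e : nrm nmA (P3 opA rA) = L3.map fun l => (6, l) := by decide +kernel
lemma A111e : nrm nmA (P111 opA rA) = L111.map fun l => (6, l) := by decide +kernel

lemma pos2 : IsMFRes .B 7 3 (e 3 1 + e 3 3) (e 7 2) := by
  refine mf_of _ 2 (by norm_num) [15,13,9,7,5,3,1] rfl ?_ (Q2 mB) (Q2 nA) ?_ (fun w hw => (Q_map _ _ _ (res_mB w hw)).1) L2 ?_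
    (by decide +kernel) (by decide +kernel)
  · ext i; fin_cases i <;> rfl
  · rw [← QB.1, ← B2, nrm_spec gB nmB hnB]
  · rw [← QA.1, ← A2e, nrm_spec gA nmA hnA]

lemma pos11 : IsMFRes .B 7 3 (e 3 1 + e 3 3) (2 • e 7 1) := by
  refine mf_of _ 2 (by norm_num) [17,11,9,7,5,3,1] rfl ?_ (Q11 mB) (Q11 nA) ?_
    (fun w hw => (Q_map _ _ _ (res_mB w hw)).2.1) L11 ?_ (by decide +kernel) (by decide +kernel)
  · ext i; fin_cases i <;> rfl
  · rw [← QB.2.1, ← B11, nrm_spec gB nmB hnB]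
  · rw [← QA.2.1, ← A11e, nrm_spec gA nmA hnA]

lemma pos3 : IsMFRes .B 7 3 (e 3 1 + e 3 3) (e 7 3) := by
  refine mf_of _ 6 (by norm_num) [15,13,11,7,5,3,1] rfl ?_ (Q3 mB) (Q3 nA) ?_
    (fun w hw => (Q_map _ _ _ (res_mB w hw)).2.2.1) L3 ?_ (by decide +kernel) (by decide +kernel)
  · ext i; fin_cases i <;> rfl
  · rw [← QB.2.2.1, ← B3, nrm_spec gB nmB hnB]
  · rw [← QA.2.2.1, ← A3e, nrm_spec gA nmA hnA]

lemma pos111 : IsMFRes .B 7 3 (e 3 1 + e 3 3) (3 • e 7 1) := by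
  refine mf_of _ 6 (by norm_num) [19,11,9,7,5,3,1] rfl ?_ (Q111 mB) (Q111 nA) ?_
    (fun w hw => (Q_map _ _ _ (res_mB w hw)).2.2.2.1) L111 ?_ (by decide +kernel) (by decide +kernel)
  · ext i; fin_cases i <;> rfl
  · rw [← QB.2.2.2.1, ← B111, nrm_spec gB nmB hnB]
  · rw [← QA.2.2.2.1, ← A111e, nrm_spec gA nmA hnA]

/-! weight systems -/
def rt (i j : Fin 4) : Fin 4 → ℚ := Pi.single i 1 - Pi.single j 1

lemma nA1 : nA 1 = (∑ i, ∑ j, mono (rt i j)) - 1 := by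
  unfold nA pA
  rw [Finset.sum_mul_sum]
  congr 1
  refine Finset.sum_congr rfl fun i _ => Finset.sum_congr rfl fun j _ => ?_
  simp only [X, mono_mul, rt, sub_eq_add_neg]
  congr 2
  ext t
  by_cases h : t = j
  · subst h; simp
  · simp [h]

lemma rt_self (i) : mono (rt i i) = 1 := by rw [rt, sub_self]; rfl
lemma rt_neg (i j) : -(rt i j) = rt j i := by simp [rt]

lemma wt_of (wm : Fin 4 → Fin 6 → ℤ) (a b : Fin 6 → Fin 4) (h : ∀ j, wOf wm j.castSucc = rt (a j) (b j))
    (hab : (∑ j, (mono (rt (a j) (b j)) + mono (rt (b j) (a j)))) + 1 + 1 + 1 + 1 = ∑ i, ∑ j, mono (rt i j)) :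
    WtSys .B 7 3 (e 3 1 + e 3 3) (wOf wm) := by
  rw [WtSys_iff, nA1, ← hab, Fin.sum_univ_castSucc (n := 6)]
  have h7 : wOf wm (Fin.last 6) = 0 := by
    unfold wOf
    exact Fin.lastCases_last
  rw [h7, neg_zero, mono_zero]
  simp only [h, rt_neg]
  ring

lemma wt1 : WtSys .B 7 3 (e 3 1 + e 3 3) (wOf wO1) := by
  apply wt_of wO1 ![0,1,2,0,0,1] ![3,3,3,2,1,2]
  · intro j; ext t; rw [wOf, Fin.lastCases_castSucc]; fin_cases j <;> fin_cases t <;> simp [wO1, rt]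
  · simp only [Fin.sum_univ_four, Fin.sum_univ_six, rt_self]
    simp
    ring
lemma wt2 : WtSys .B 7 3 (e 3 1 + e 3 3) (wOf wO2) := by
  apply wt_of wO2 ![0,1,0,1,2,0] ![3,3,2,2,3,1]
  · intro j; ext t; rw [wOf, Fin.lastCases_castSucc]; fin_cases j <;> fin_cases t <;> simp [wO2, rt]
  · simp only [Fin.sum_univ_four, Fin.sum_univ_six, rt_self]
    simp
    ring
lemma wt3 : WtSys .B 7 3 (e 3 1 + e 3 3) (wOf wO3) := by
  apply wt_of wO3 ![0,1,0,2,0,1] ![3,3,2,3,1,2]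
  · intro j; ext t; rw [wOf, Fin.lastCases_castSucc]; fin_cases j <;> fin_cases t <;> simp [wO3, rt]
  · simp only [Fin.sum_univ_four, Fin.sum_univ_six, rt_self]
    simp
    ring

end MFProof

namespace MFProof

lemma altA_int (m q : Fin 4 → ℤ) : (altA 3 (fun i => (m i : ℚ))).coeff (fun t => (q t : ℚ)) =
    ldet (List.ofFn m) ((List.ofFn q).map (fun y x => if x = y then 1 else 0)) := by
  rw [List.map_ofFn, ldet_ofFn, altA_coeff, Matrix.det_apply]
  refine Finset.sum_congr rfl fun σ _ => ?_
  simp only [Matrix.of_apply, Units.smul_def, smul_eq_mul, Function.comp]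
  congr 1
  rw [Finset.prod_ite_zero]
  simp only [Finset.prod_const_one, Finset.mem_univ, true_implies, funext_iff, Int.cast_inj]

def q4 : Fin 4 → ℤ := ![5, 2, 1, -2]

lemma FF_q4 (a b c d : ℤ) : (FF gA [a,b,c,d]).coeff (fun t => (q4 t : ℚ)) =
    ldet [a,b,c,d] ([5,2,1,-2].map (fun y x => if x = y then 1 else 0)) := by
  have h := altA_int ![a,b,c,d] q4
  have h1 : List.ofFn ![a,b,c,d] = [a,b,c,d] := by simp [List.ofFn_succ]
  have h2 : List.ofFn q4 = [5,2,1,-2] := by simp [List.ofFn_succ, q4]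
  rw [h1, h2] at h
  have h3 : (fun i : Fin 4 => (([a,b,c,d].getD i 0 : ℤ) : ℚ)) = fun i => ((![a,b,c,d] i : ℤ) : ℚ) := by
    ext i
    fin_cases i <;> rfl
  rw [← h, altA_FF _ rfl, h3]

def ck (l : List ℤ) : ℤ := match l with
  | [a,b,c,d] => ldet [a,b,c,d] ([5,2,1,-2].map (fun y x => if x = y then 1 else 0))
  | _ => 0

lemma ev_q4 : ∀ C : List (ℤ × List ℤ), (∀ x ∈ C, x.2.length = 4) →
    (ev gA C).coeff (fun t => (q4 t : ℚ)) = (C.map fun x => x.1 * ck x.2).sum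
  | [], _ => by simp [ev_nil]
  | (z, l) :: C, h => by
    have hl := h _ (List.mem_cons_self)
    rw [ev_cons, List.map_cons, List.sum_cons, ← ev_q4 C (fun x hx => h x (List.mem_cons_of_mem _ hx)),
      AddMonoidAlgebra.coeff_add, Finsupp.add_apply, mul_comm, coeff_mul_int]
    congr 1
    match l, hl with
    | [a,b,c,d], _ => rw [FF_q4, mul_comm]; rfl

lemma len1111 : ∀ x ∈ nrm nmA (P1111 opA rA), x.2.length = 4 := by decide +kernel
lemma val1111 : ((nrm nmA (P1111 opA rA)).map fun x => x.1 * ck x.2).sum = 48 := by decide +kernel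

def lk (k : ℕ) : Fin 7 → ℕ := k • e 7 1

lemma mY_lk (k : ℕ) : (fun i => (mY (lk k) i : ℤ)) = ![2 * (k:ℤ) + 13, 11, 9, 7, 5, 3, 1] := by
  ext i; fin_cases i <;> simp [mY, lk, e]

lemma H4 (f : CharRing 7) (hf : IsCharY .B 7 (lk 4) f) :
    (mapR (resH (wOf wO3)) f * altA 3 (rhoA 3)).coeff (fun t => (q4 t : ℚ)) = 2 := by
  have h1 : ((24 : ℤ) : CharRing 7) * f = Q1111 mB := by
    apply mul_left_cancel₀ altY_rho_ne
    rw [← evB_r, ← QB.2.2.2.2, ← nrm_spec gB nmB hnB (P1111 opB rB), B1111, ev_cons, ev_nil, add_zero, altY_FF _ rfl, evB_r, mul_left_comm]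
    unfold IsCharY at hf
    rw [hf, mY_eq]
    congr 2
    ext i
    have := congrFun (mY_lk 4) i
    have h2 : (mY (lk 4) i : ℚ) = ((mY (lk 4) i : ℤ) : ℚ) := by simp
    rw [h2, this]
    fin_cases i <;> simp
  have h2 : ((24 : ℤ) : CharRing 4) * (mapR (resH (wOf wO3)) f * altA 3 (rhoA 3)) = ev gA (nrm nmA (P1111 opA rA)) := by
    rw [nrm_spec gA nmA hnA, QA.2.2.2.2, ← (Q_map _ _ _ (res_mB _ wt3)).2.2.2.2, ← h1, map_mul, map_intCast, evA_r]
    ring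
  have h3 : (((24 : ℤ) : CharRing 4) * (mapR (resH (wOf wO3)) f * altA 3 (rhoA 3))).coeff (fun t => (q4 t : ℚ)) =
    (ev gA (nrm nmA (P1111 opA rA))).coeff (fun t => (q4 t : ℚ)) := by rw [h2]
  rw [ev_q4 _ len1111, val1111, mul_comm, coeff_mul_int] at h3
  omega

lemma kdet (v v' : Fin 7 → ℤ) (β : Fin 6 → ℕ) (hs : ∀ i : Fin 6, v i.succ = v' i.succ) (hp : ∀ i : Fin 6, 0 < v i.succ)
    (h1 : ∀ i : Fin 6, v i.succ < v 0 - 2 * β 0) (h2 : ∀ i : Fin 6, v i.succ < v' 0 - 2 * β 0) :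
    (Dd 6 v).coeff (init6 v - shq β) = (Dd 6 v').coeff (init6 v' - shq β) := by
  rw [← half_sub, ← half_sub, Dd_coeff, Dd_coeff, Matrix.det_apply, Matrix.det_apply]
  refine Finset.sum_congr rfl fun σ _ => ?_
  congr 1
  simp only [Nm, Matrix.of_apply]
  have hsh : sh (fun i => (β i : ℤ)) 0 = β 0 := rfl
  have hz : ∀ (u : Fin 7 → ℤ) (hup : ∀ i : Fin 6, 0 < u i.succ) (hu : ∀ i : Fin 6, u i.succ < u 0 - 2 * β 0) (i : Fin 6),
      ent (u i.succ) (u 0 - 2 * sh (fun i => (β i : ℤ)) 0) = 0 := by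
    intro u hup hu i
    have := hu i
    have := hup i
    unfold ent
    rw [hsh, if_neg (by omega), if_neg (by omega)]; rfl
  by_cases h0 : σ 0 = 0
  · refine Finset.prod_congr rfl fun j _ => ?_
    have hj : j ≠ 0 → ∃ i : Fin 6, σ j = i.succ := by
      intro hj
      obtain ⟨i, hi⟩ := Fin.exists_succ_eq.2 (fun h => hj (σ.injective (h.trans h0.symm)))
      exact ⟨i, hi.symm⟩
    by_cases hj0 : j = 0
    · subst hj0
      rw [h0]
      have e0 : (0 : Fin 7) = Fin.castSucc (0 : Fin 6) := rfl
      rw [e0, Fin.lastCases_castSucc, Fin.lastCases_castSucc]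
      have a1 := hp 0
      have a2 := h1 0
      have a3 := h2 0
      rw [← e0]
      unfold ent
      rw [hsh, if_neg (by omega : ¬ (-v 0 = _)), if_neg (by omega : ¬ (-v' 0 = _))]
      congr 1
      apply if_congr _ rfl rfl
      omega
    · obtain ⟨i, hi⟩ := hj hj0
      rw [hi]
      obtain ⟨j', rfl⟩ := Fin.exists_succ_eq.2 hj0
      have hjs := hs j'
      revert hjs
      generalize j'.succ = j
      refine Fin.lastCases ?_ (fun j => ?_) j
      · intro _; simp only [Fin.lastCases_last, hs]
      · intro hjs; simp only [Fin.lastCases_castSucc, hs, hjs]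
  · obtain ⟨i, hi⟩ := Fin.exists_succ_eq.2 h0
    have key : ∀ (u : Fin 7 → ℤ) (hup : ∀ i : Fin 6, 0 < u i.succ) (hu : ∀ i : Fin 6, u i.succ < u 0 - 2 * β 0),
      ∏ j, (Fin.lastCases (motive := fun _ => ℤ) (u (σ j)) (fun j' => ent (u (σ j)) (u j'.castSucc - 2 * sh (fun i => (β i : ℤ)) j')) j) = 0 := by
      intro u hup hu
      apply Finset.prod_eq_zero (Finset.mem_univ (Fin.castSucc (0 : Fin 6)))
      rw [Fin.lastCases_castSucc]
      have e0 : (0 : Fin 7) = Fin.castSucc (0 : Fin 6) := rfl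
      rw [← e0, ← hi]
      exact hz u hup hu i
    rw [key v hp h1, key v' (fun i => by rw [← hs]; exact hp i) (fun i => by rw [← hs]; exact h2 i)]

end MFProof

namespace MFProof

lemma mono_mul_coeff {k : ℕ} (a : Fin k → ℚ) (f : CharRing k) (p) : (mono a * f).coeff p = f.coeff (p - a) := by
  rw [mul_coeff, mono, AddMonoidAlgebra.coeff_single, Finsupp.sum_single_index] <;> simp

lemma kcmp (v v' : Fin 7 → ℤ) (hm : Antitone v) (hm' : Antitone v') (hn : ∀ i, 0 ≤ v i) (hn' : ∀ i, 0 ≤ v' i)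
    (hpar : ∀ i j, (v i - v j) % 2 = 0) (hpar' : ∀ i j, (v' i - v' j) % 2 = 0)
    (hs : ∀ i : Fin 6, v i.succ = v' i.succ) (hp : ∀ i : Fin 6, 0 < v i.succ)
    (h1 : ∀ i : Fin 6, v i.succ < v 0 - 8) (h2 : ∀ i : Fin 6, v i.succ < v' 0 - 8) (f f' : CharRing 6)
    (hf : Dd 6 rho7 * f = Dd 6 v) (hf' : Dd 6 rho7 * f' = Dd 6 v') (u : Fin 6 → ℚ)
    (hu : (mono (init6 rho7 - init6 v) * f - mono (init6 rho7 - init6 v') * f').coeff u ≠ 0) :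
    ∃ β : Fin 6 → ℕ, 5 ≤ β 0 ∧ u = - shq β := by
  generalize hr : init6 rho7 = r at *
  refine supp_lemma (mono (r - init6 v) * f - mono (r - init6 v') * f')
    (mono (r - init6 v) * Dd 6 v - mono (r - init6 v') * Dd 6 v') ?_ {u | ∃ β : Fin 6 → ℕ, 5 ≤ β 0 ∧ u = - shq β} ?_ ?_ u hu
  · rw [← hf, ← hf']; ring
  · rintro u ⟨β, hβ, rfl⟩ γ
    refine ⟨β + γ, ?_, ?_⟩
    · simp only [Pi.add_apply]; omega
    · rw [shq_add]; abel
  · intro u hu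
    rw [hr, AddMonoidAlgebra.coeff_sub, Finsupp.sub_apply, mono_mul_coeff, mono_mul_coeff] at hu
    have e1 : r + u - (r - init6 v) = init6 v + u := by abel
    have e2 : r + u - (r - init6 v') = init6 v' + u := by abel
    rw [e1, e2] at hu
    have hβ : ∃ β, u = - shq β := by
      by_cases hc : (Dd 6 v).coeff (init6 v + u) = 0
      · rw [hc, zero_sub, neg_ne_zero] at hu
        obtain ⟨β, hβ⟩ := Dd_supp v' hm' hn' hpar' _ hu
        rw [half_sub] at hβ
        exact ⟨β, by rw [sub_eq_add_neg] at hβ; exact add_left_cancel hβ⟩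
      · obtain ⟨β, hβ⟩ := Dd_supp v hm hn hpar _ hc
        rw [half_sub] at hβ
        exact ⟨β, by rw [sub_eq_add_neg] at hβ; exact add_left_cancel hβ⟩
    obtain ⟨β, rfl⟩ := hβ
    refine ⟨β, ?_, rfl⟩
    by_contra hlt
    apply hu
    have key := kdet v v' β hs hp (fun i => by have := h1 i; omega) (fun i => by have := h2 i; omega)
    have a1 : init6 v - shq β = init6 v + -shq β := sub_eq_add_neg _ _
    have a2 : init6 v' - shq β = init6 v' + -shq β := sub_eq_add_neg _ _
    rw [a1, a2] at key
    exact sub_eq_zero.2 key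

def kq : Fin 4 → ℚ := ![1, 2, 1, 2]

lemma kzero (β : Fin 6 → ℕ) (hβ : 5 ≤ β 0) : (altA 3 (rhoA 3)).coeff (kq - resA wO3 (-shq β)) = 0 := by
  by_contra hc
  have h := altA_ne _ _ hc
  have hb : ∀ i, 0 ≤ (kq - resA wO3 (-shq β)) i ∧ (kq - resA wO3 (-shq β)) i ≤ 3 := by
    intro i
    have : (kq - resA wO3 (-shq β)) i ∈ Set.range (rhoA 3) := by rw [← h]; exact ⟨i, rfl⟩
    obtain ⟨j, hj⟩ := this
    rw [← hj]
    fin_cases j <;> simp [rhoA] <;> norm_num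
  have b0 := (hb 0).2
  have b3 := (hb 3).1
  have hq : (5:ℚ) ≤ β 0 := by exact_mod_cast hβ
  have hq4 : (0:ℚ) ≤ β 4 := by positivity
  rw [map_neg] at b0 b3
  simp [kq, resA, shq, sh, wO3, Fin.sum_univ_six] at b0 b3
  linarith

lemma bigA1111 (k : ℕ) (hk : 4 ≤ k) : ¬ IsMFRes .B 7 3 (e 3 1 + e 3 3) (lk k) := by
  apply not_mf wO3 wt3
  intro f hf
  obtain ⟨F, hF, hF'⟩ := char_ex (lk 4)
  have h4 := H4 F hF
  rw [← resChar_eq, res_eq] at h4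
  have hs := kcmp _ _ (mY_anti (lk k)).antitone (mY_anti (lk 4)).antitone (fun i => by positivity) (fun i => by positivity)
    (mY_par _) (mY_par _)
    (by intro i; fin_cases i <;> simp [mY, lk, e])
    (by intro i; exact mY_pos _ _) (by intro i; fin_cases i <;> simp [mY, lk, e] <;> omega)
    (by intro i; fin_cases i <;> simp [mY, lk, e]) _ _ hf hF'
  generalize hv : (fun i => (mY (lk k) i : ℤ)) = v at *
  generalize hv' : (fun i => (mY (lk 4) i : ℤ)) = v' at *
  generalize hr : init6 rho7 = r at *
  generalize mapR drop F = f' at *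
  have hz : (mapR (resA wO3) (mono (r - init6 v) * f - mono (r - init6 v') * f') * altA 3 (rhoA 3)).coeff kq = 0 := by
    rw [mapR_mul_coeff, Finsupp.sum]
    refine Finset.sum_eq_zero fun ν hν => ?_
    obtain ⟨β, hβ, rfl⟩ := hs ν (by simpa using hν)
    rw [kzero β hβ, mul_zero]
  rw [map_sub, map_mul, map_mul, mapR_mono, mapR_mono, sub_mul, AddMonoidAlgebra.coeff_sub, Finsupp.sub_apply, mul_assoc, mul_assoc,
    mono_mul_coeff, mono_mul_coeff, sub_eq_zero] at hz
  refine ⟨_, le_of_eq (Eq.trans ?_ hz.symm)⟩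
  rw [← h4]
  congr 1
  ext t
  rw [← hr, ← hv', mY_lk]
  fin_cases t <;> simp [q4, kq, resA, wO3, Fin.sum_univ_six, init6, half, rho7, Fin.rev] <;> norm_num

lemma main_neg (lam : Fin 7 → ℕ) (h : IsMFRes .B 7 3 (e 3 1 + e 3 3) lam) :
    lam 6 = 0 ∧ lam 5 = 0 ∧ lam 4 = 0 ∧ lam 3 = 0 ∧
    ((lam 2 = 0 ∧ lam 1 = 0 ∧ lam 0 ≤ 3) ∨ (lam 2 = 0 ∧ lam 1 = 1 ∧ lam 0 = 0) ∨ (lam 2 = 1 ∧ lam 1 = 0 ∧ lam 0 = 0)) := by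
  have h6 : lam 6 = 0 := by
    by_contra hc
    exact not_mf_cert cert7 wt1 lam (big7 lam (by omega)) h
  have hL := mY_vL lam h6
  have h5 : lam 5 = 0 := by
    by_contra hc
    exact not_mf_cert certA6 wt1 lam (by rw [hL]; exact bigA6 _ _ _ _ _ _ (by omega)) h
  have h4 : lam 4 = 0 := by
    by_contra hc
    exact not_mf_cert certA5 wt1 lam (by rw [hL, h5]; exact bigA5 _ _ _ _ _ (by omega)) h
  have h3 : lam 3 = 0 := by
    by_contra hc
    exact not_mf_cert certA4 wt2 lam (by rw [hL, h5, h4]; exact bigA4 _ _ _ _ (by omega)) h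
  rw [h5, h4, h3] at hL
  refine ⟨h6, h5, h4, h3, ?_⟩
  by_cases h2 : lam 2 = 0
  · by_cases h1 : lam 1 = 0
    · left
      refine ⟨h2, h1, ?_⟩
      by_contra hc
      apply bigA1111 (lam 0) (by omega)
      have : lk (lam 0) = lam := by
        ext i; fin_cases i <;> simp [lk, e, *]
      rw [this]; exact h
    · right; left
      by_contra hc
      rw [h2] at hL
      exact not_mf_cert certA12 wt3 lam (by rw [hL]; exact bigA12 _ _ (by omega) (by omega)) h
  · right; right
    have h1 : lam 1 = 0 := by
      by_contra hc
      exact not_mf_cert certA23 wt1 lam (by rw [hL]; exact bigA23 _ _ _ (by omega) (by omega)) h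
    rw [h1] at hL
    have h0 : lam 0 = 0 := by
      by_contra hc
      exact not_mf_cert certA13 wt1 lam (by rw [hL]; exact bigA13 _ _ (by omega) (by omega)) h
    rw [h0] at hL
    refine ⟨?_, h1, h0⟩
    by_contra hc
    exact not_mf_cert certA33 wt1 lam (by rw [hL]; exact bigA33 _ (by omega)) h

end MFProof

/-- **Proposition 5.3.**  Let `X = A₃ < Y = B₇ = SO₁₅` via the 15-dimensional adjoint
representation `δ = ω₁ + ω₃`.  Let `lam ≠ 0, λ₁` be a dominant weight for `Y`.
Then `V_Y(lam)↓X` is multiplicity-free if and only if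
`lam = λ₂, 2λ₁, 3λ₁` or `λ₃`. -/
theorem thm_A3_in_B7 (lam : Fin 7 → ℕ)
    (hlam0 : lam ≠ 0) (hlam1 : lam ≠ e 7 1) :
    IsMFRes CType.B 7 3 (e 3 1 + e 3 3) lam ↔
      (lam = e 7 2 ∨ lam = 2 • e 7 1 ∨ lam = 3 • e 7 1 ∨ lam = e 7 3) := by
  constructor
  · intro h
    obtain ⟨h6, h5, h4, h3, hh⟩ := MFProof.main_neg lam h
    rcases hh with ⟨h2, h1, h0⟩ | ⟨h2, h1, h0⟩ | ⟨h2, h1, h0⟩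
    · have h0' : lam 0 = 0 ∨ lam 0 = 1 ∨ lam 0 = 2 ∨ lam 0 = 3 := by omega
      clear h0
      rcases h0' with h0 | h0 | h0 | h0
      · exact absurd (by ext i; fin_cases i <;> simp [*]) hlam0
      · exact absurd (by ext i; fin_cases i <;> simp [e, *]) hlam1
      · right; left; ext i; fin_cases i <;> simp [e, *]
      · right; right; left; ext i; fin_cases i <;> simp [e, *]
    · left; ext i; fin_cases i <;> simp [e, *]
    · right; right; right; ext i; fin_cases i <;> simp [e, *]
  · rintro (rfl | rfl | rfl | rfl)
    · exact MFProof.pos2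
    · exact MFProof.pos11
    · exact MFProof.pos111
    · exact MFProof.pos3
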